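/- Let p ∈ (1, ∞). Let Φ be a Φ-function such that Φ ∈ (Inc)_p ∩ (Dec), sup_{t>0} Φ(t)Φ(t^{-1}) < ∞, and Φ' is continuous on (0, ∞). Assume there is a Φ-function Ψ ∈ (aInc)_p ∩ (Dec) and a constant K ≥ 1 such that Φ(ts)/Φ(t) ≤ K·Ψ(s) for all t, s > 0. Then there exist positive constants C and c depending only on Φ, Ψ, p such that for every N-dimensional subspace X_N ⊂ C(Ω) (with no further assumptions), there is a set x = {x₁, …, x_m} ⊂ Ω of cardinality m ≤ c·Ψ(N^{1/min{p,2}})·(log 2N)³ such that ‖f‖_Φ ≤ C·(M_{Φ,Ψ}(m))^{1/p}·‖f‖_{Ψ,x} for all f ∈ X_N, where M_{Φ,Ψ}(m) := max{1, max{Ψ(t)/Φ(t) : t ∈ [Φ^{-1}(1), Φ^{-1}(m)]}} and ‖f‖_{Ψ,x} is the discrete Luxemburg functional with equal weights 1/m. -/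

import Mathlib

open MeasureTheory

noncomputable section

/-- The sup-norm (uniform norm) `‖f‖_∞ = sup_{x ∈ Ω} |f x|` of a real-valued function. -/
def supNorm {Ω : Type*} (f : Ω → ℝ) : ℝ := ⨆ x, |f x|

/-- The Luxemburg functional `‖f‖_Φ = inf {λ > 0 : ∫ Φ(|f|/λ) dμ ≤ 1}`. -/
def luxNorm {Ω : Type*} [MeasurableSpace Ω] (μ : Measure Ω) (Φ : ℝ → ℝ) (f : Ω → ℝ) : ℝ :=
  sInf {lam : ℝ | 0 < lam ∧ ∫ x, Φ (|f x| / lam) ∂μ ≤ 1}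

/-- The discrete Luxemburg functional `‖f‖_{Φ,x}` with respect to the uniform discrete
probability measure `(1/m) ∑_{j=1}^m δ_{x_j}`. -/
def discLuxNorm {Ω : Type*} (Φ : ℝ → ℝ) {m : ℕ} (x : Fin m → Ω) (f : Ω → ℝ) : ℝ :=
  sInf {lam : ℝ | 0 < lam ∧ (∑ j, Φ (|f (x j)| / lam)) / (m : ℝ) ≤ 1}

/-- The weighted discrete Luxemburg functional `‖f‖_{Φ,x,λ}` with respect to the discrete
probability measure `∑_{j=1}^m λ_j δ_{x_j}`. -/
def wDiscLuxNorm {Ω : Type*} (Φ : ℝ → ℝ) {m : ℕ} (x : Fin m → Ω) (w : Fin m → ℝ)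
    (f : Ω → ℝ) : ℝ :=
  sInf {lam : ℝ | 0 < lam ∧ (∑ j, w j * Φ (|f (x j)| / lam)) ≤ 1}

/-- `Φ : [0,∞) → [0,∞)` is a Φ-prefunction: increasing, `Φ(0) = 0`, `Φ(0+) = 0`,
`Φ(∞) = ∞` (stated for a function on `ℝ`, with the relevant conditions on `[0,∞)`). -/
structure IsPhiPrefun (Φ : ℝ → ℝ) : Prop where
  mono : MonotoneOn Φ (Set.Ici 0)
  map_zero : Φ 0 = 0
  nonneg : ∀ t : ℝ, 0 ≤ t → 0 ≤ Φ t
  tendsto_zero : Filter.Tendsto Φ (nhdsWithin 0 (Set.Ioi 0)) (nhds 0)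
  tendsto_atTop : Filter.Tendsto Φ Filter.atTop Filter.atTop

/-- `Φ ∈ (aInc)_p` with constant `a`: `t ↦ Φ(t) t^{-p}` is almost increasing on `(0,∞)`. -/
def AIncP (Φ : ℝ → ℝ) (p a : ℝ) : Prop :=
  ∀ s t : ℝ, 0 < s → s < t → Φ s / s ^ p ≤ a * (Φ t / t ^ p)

/-- `Φ ∈ (Inc)_p` : `t ↦ Φ(t) t^{-p}` is increasing on `(0,∞)`. -/
def IncP (Φ : ℝ → ℝ) (p : ℝ) : Prop :=
  ∀ s t : ℝ, 0 < s → s < t → Φ s / s ^ p ≤ Φ t / t ^ p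

/-- `Φ ∈ (Dec)_q` : `t ↦ Φ(t) t^{-q}` is decreasing on `(0,∞)`. -/
def DecQ (Φ : ℝ → ℝ) (q : ℝ) : Prop :=
  ∀ s t : ℝ, 0 < s → s < t → Φ t / t ^ q ≤ Φ s / s ^ q

/-- `Φ ∈ (aDec)_q` with constant `b`: `t ↦ Φ(t) t^{-q}` is almost decreasing on `(0,∞)`. -/
def ADecQ (Φ : ℝ → ℝ) (q b : ℝ) : Prop :=
  ∀ s t : ℝ, 0 < s → s < t → Φ t / t ^ q ≤ b * (Φ s / s ^ q)

/-- `t ↦ Φ(t) t^{-p}` is almost increasing with constant `a` on `(t_*, ∞)`. -/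
def AIncPOn (Φ : ℝ → ℝ) (p a tstar : ℝ) : Prop :=
  ∀ s t : ℝ, tstar < s → s < t → Φ s / s ^ p ≤ a * (Φ t / t ^ p)

/-- `t ↦ Φ(t) t^{-q}` is almost decreasing with constant `b` on `(t_*, ∞)`. -/
def ADecQOn (Φ : ℝ → ℝ) (q b tstar : ℝ) : Prop :=
  ∀ s t : ℝ, tstar < s → s < t → Φ t / t ^ q ≤ b * (Φ s / s ^ q)

/-- Entropy numbers `e_n(F, d)` of a set `F` with respect to a distance-like function `dd`:
the infimum of `ε > 0` such that `F` can be covered by `2^{2^n}` (one, for `n = 0`)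
`ε`-balls centered in `F`. -/
def entropyNumD {X : Type*} (dd : X → X → ℝ) (F : Set X) (n : ℕ) : ℝ :=
  sInf {ε : ℝ | 0 < ε ∧ ∃ T : Finset X, ↑T ⊆ F ∧
    T.card ≤ (if n = 0 then 1 else 2 ^ 2 ^ n) ∧ ∀ f ∈ F, ∃ g ∈ T, dd f g < ε}

/-- Sampling numbers `ϱ_m(F, ‖·‖)`: recovery by linear methods from samples at `m` points. -/
def sampNum {Ω : Type*} (nrm : (Ω → ℝ) → ℝ) (F : Set (Ω → ℝ)) (m : ℕ) : ℝ :=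
  sInf {r : ℝ | ∃ (x : Fin m → Ω) (T : (Fin m → ℝ) →ₗ[ℝ] (Ω → ℝ)),
    r = ⨆ f ∈ F, nrm (fun y => f y - T (fun j => f (x j)) y)}

/-- Modified sampling numbers `ϱ*_m(F, ‖·‖)`: recovery by arbitrary methods mapping into a
subspace of dimension at most `m`, from samples at `m` points. -/
def sampNumStar {Ω : Type*} (nrm : (Ω → ℝ) → ℝ) (F : Set (Ω → ℝ)) (m : ℕ) : ℝ :=
  sInf {r : ℝ | ∃ (x : Fin m → Ω) (Y : Submodule ℝ (Ω → ℝ)), Module.finrank ℝ Y ≤ m ∧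
    ∃ T : (Fin m → ℝ) → Ω → ℝ, (∀ v, T v ∈ Y) ∧
    r = ⨆ f ∈ F, nrm (fun y => f y - T (fun j => f (x j)) y)}

/-- Kolmogorov width `d_N(F, ‖·‖_∞)` : infimum over `N`-dimensional subspaces of `C(Ω)` of the
worst-case best approximation error in the uniform norm. -/
def kolWidth {Ω : Type*} [TopologicalSpace Ω] (F : Set (Ω → ℝ)) (N : ℕ) : ℝ :=
  sInf {r : ℝ | ∃ X : Submodule ℝ (Ω → ℝ), Module.finrank ℝ X = N ∧
    (∀ u ∈ X, Continuous u) ∧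
    r = ⨆ f ∈ F, sInf ((fun u => supNorm (fun y => f y - u y)) '' (X : Set (Ω → ℝ)))}

end
/-- `M_{Φ,Ψ}(m) = max{1, max{Ψ(t)/Φ(t) : t ∈ [Φ⁻¹(1), Φ⁻¹(m)]}}`, the interval
`[Φ⁻¹(1), Φ⁻¹(m)]` being expressed through the condition `Φ(t) ∈ [1, m]`. -/
noncomputable def MOf (Φ Ψ : ℝ → ℝ) (m : ℝ) : ℝ :=
  max 1 (sSup ((fun t => Ψ t / Φ t) '' {t : ℝ | 0 < t ∧ 1 ≤ Φ t ∧ Φ t ≤ m}))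

/-!
Maximizing `log |det A|` minus the integral of `Φ ‖A u‖` puts an `N`-dimensional space of functions
`⟪v, u⟫` on a finite set in a position where the Euclidean norm of `v` is at most a radius `R`,
`R ^ min p 2 ~ N`, on the modular ball and `Φ ‖u‖` is a density of bounded mass. Dual Sudakov
minoration then gives nets of the modular ball at the scales `R / 2 ^ j`, with entropy at most
`(2 ^ j) ^ min p 2` up to the logarithm of the number of points. Decompose `Φ |⟪v, u⟫|` into layers
according to the size of `|⟪v, u⟫| / ‖u‖`. The layer of height `s` is at most `K Ψ(s) Φ ‖u‖`, so
random points drawn from the density `Φ ‖u‖` preserve it simultaneously at all points of the net of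
scale `s`, and the layers add up to a lower bound on the whole modular ball.

The logarithm of the number of points is brought down to `log N` by sampling twice. A first sample,
obtained with Euclidean nets whose entropy does not see the number of points, has size polynomial in
`N`; the second one is drawn from it. A general probability measure reduces to a finite set because
the evaluation functionals of a finite-dimensional space of bounded functions are totally bounded.
-/

/-! ### Functions of power growth -/

/-- `Φ` grows at least as fast as `t ^ r` and at most as fast as `t ^ q` on `[0, ∞)`, that is
`Φ ∈ (Inc)_r ∩ (Dec)_q`, written as scaling inequalities so that `t = 0` is included. -/
structure PowerGrowth (Φ : ℝ → ℝ) (r : ℝ) (q : ℕ) : Prop where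
  one_le : 1 ≤ r
  map_zero : Φ 0 = 0
  pos : ∀ t, 0 < t → 0 < Φ t
  rpow_mul_le : ∀ y t, 1 ≤ y → 0 ≤ t → y ^ r * Φ t ≤ Φ (y * t)
  le_pow_mul : ∀ y t, 1 ≤ y → 0 ≤ t → Φ (y * t) ≤ y ^ q * Φ t

namespace PowerGrowth

variable {Φ : ℝ → ℝ} {r : ℝ} {q : ℕ}

theorem nonneg (h : PowerGrowth Φ r q) {t : ℝ} (ht : 0 ≤ t) : 0 ≤ Φ t := by
  rcases ht.eq_or_lt with rfl | ht
  exacts [h.map_zero.ge, (h.pos t ht).le]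

theorem mul_le (h : PowerGrowth Φ r q) {y t : ℝ} (hy : 1 ≤ y) (ht : 0 ≤ t) :
    y * Φ t ≤ Φ (y * t) :=
  calc y * Φ t = y ^ (1 : ℝ) * Φ t := by rw [Real.rpow_one]
    _ ≤ y ^ r * Φ t := mul_le_mul_of_nonneg_right
        (Real.rpow_le_rpow_of_exponent_le hy h.one_le) (h.nonneg ht)
    _ ≤ Φ (y * t) := h.rpow_mul_le y t hy ht

theorem mono (h : PowerGrowth Φ r q) {s t : ℝ} (hs : 0 ≤ s) (hst : s ≤ t) : Φ s ≤ Φ t := by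
  rcases hs.eq_or_lt with rfl | hs'
  · exact h.map_zero.trans_le (h.nonneg hst)
  · have hle := h.mul_le ((one_le_div hs').2 hst) hs
    rw [div_mul_cancel₀ _ hs'.ne'] at hle
    exact (le_mul_of_one_le_left (h.nonneg hs) ((one_le_div hs').2 hst)).trans hle

theorem map_mul_le_div_mul (h : PowerGrowth Φ r q) {w s t : ℝ} (hw : 0 ≤ w) (hs : 0 ≤ s)
    (hst : s ≤ t) : Φ (w * s) ≤ s / t * Φ (w * t) := by
  rcases hs.eq_or_lt with rfl | hs'
  · simp [h.map_zero]
  · have ht : 0 < t := hs'.trans_le hst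
    have hle := h.mul_le ((one_le_div hs').2 hst) (mul_nonneg hw hs)
    rw [show t / s * (w * s) = w * t by field_simp] at hle
    calc Φ (w * s) = s / t * (t / s * Φ (w * s)) := by field_simp
      _ ≤ s / t * Φ (w * t) := mul_le_mul_of_nonneg_left hle (by positivity)

theorem map_one_mul_sub_one_le (h : PowerGrowth Φ r q) {t : ℝ} (ht : 0 ≤ t) :
    Φ 1 * (t - 1) ≤ Φ t := by
  have hpos := h.pos 1 one_pos
  rcases le_total t 1 with ht1 | ht1
  · nlinarith [h.nonneg ht]
  · have hle := h.mul_le ht1 zero_le_one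
    rw [mul_one] at hle
    linarith

theorem abs_sub_le (h : PowerGrowth Φ r q) {s t : ℝ} (hs : 0 < s) (ht : 0 ≤ t) :
    |Φ t - Φ s| ≤ |(t / s) ^ q - 1| * Φ s := by
  have hΦs := h.pos s hs
  rcases ht.eq_or_lt with rfl | ht'
  · have hup := h.le_pow_mul 2 s one_le_two hs.le
    rcases Nat.eq_zero_or_pos q with rfl | hq
    · have hlow := h.mul_le one_le_two hs.le
      linarith
    · simp [h.map_zero, hq.ne', abs_of_pos hΦs]
  have hts : t / s * s = t := div_mul_cancel₀ _ hs.ne'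
  rcases le_total s t with hst | hst
  · have hy : 1 ≤ t / s := (one_le_div hs).2 hst
    have hup := h.le_pow_mul _ s hy hs.le
    rw [hts] at hup
    rw [abs_of_nonneg (sub_nonneg.2 (h.mono hs.le hst)),
      abs_of_nonneg (sub_nonneg.2 (one_le_pow₀ hy))]
    linarith
  · have hy : 1 ≤ s / t := (one_le_div ht').2 hst
    have hup := h.le_pow_mul _ t hy ht
    rw [div_mul_cancel₀ _ ht'.ne'] at hup
    have hlow : (t / s) ^ q * Φ s ≤ Φ t := by
      calc (t / s) ^ q * Φ s ≤ (t / s) ^ q * ((s / t) ^ q * Φ t) :=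
            mul_le_mul_of_nonneg_left hup (by positivity)
        _ = (t / s * (s / t)) ^ q * Φ t := by rw [mul_pow, mul_assoc]
        _ = Φ t := by rw [div_mul_div_cancel₀ hs.ne', div_self ht'.ne', one_pow, one_mul]
    rw [abs_of_nonpos (sub_nonpos.2 (h.mono ht hst)),
      abs_of_nonpos (sub_nonpos.2 (pow_le_one₀ (by positivity) ((div_le_one hs).2 hst)))]
    linarith

theorem continuous_comp_abs (h : PowerGrowth Φ r q) : Continuous fun t => Φ |t| := by
  refine continuous_iff_continuousAt.2 fun s => tendsto_iff_dist_tendsto_zero.2 ?_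
  rcases eq_or_ne s 0 with rfl | hs
  · refine squeeze_zero' (g := fun t => |t| * Φ 1) (.of_forall fun _ => dist_nonneg) ?_ ?_
    · filter_upwards [Metric.ball_mem_nhds (0 : ℝ) one_pos] with t ht
      have ht1 : |t| ≤ 1 := by simpa using (Metric.mem_ball.1 ht).le
      have hle := h.map_mul_le_div_mul zero_le_one (abs_nonneg t) ht1
      simpa [h.map_zero, Real.dist_eq, abs_of_nonneg (h.nonneg (abs_nonneg t))] using hle
    · have : Continuous fun t : ℝ => |t| * Φ 1 := by fun_prop
      simpa using this.tendsto 0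
  · refine squeeze_zero (g := fun t => |(|t| / |s|) ^ q - 1| * Φ |s|) (fun _ => dist_nonneg)
      (fun t => h.abs_sub_le (abs_pos.2 hs) (abs_nonneg t)) ?_
    have : Continuous fun t : ℝ => |(|t| / |s|) ^ q - 1| * Φ |s| := by fun_prop
    simpa [hs] using this.tendsto s

theorem continuous_comp_norm {E : Type*} [NormedAddCommGroup E] (h : PowerGrowth Φ r q) :
    Continuous fun x : E => Φ ‖x‖ := by
  simpa [Function.comp_def] using h.continuous_comp_abs.comp (continuous_norm (E := E))

end PowerGrowth

/-! ### Lewis position -/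

section DeterminantMaximizer

open Module NormedSpace

variable {E : Type*} [NormedAddCommGroup E] [NormedSpace ℝ E]

theorem norm_normalize_le_one (x : E) : ‖normalize x‖ ≤ 1 := by
  rcases eq_or_ne x 0 with rfl | hx
  · simp
  · exact (norm_normalize hx).le

variable [FiniteDimensional ℝ E]

theorem exists_abs_det_le_mul_norm_pow :
    ∃ C : ℝ, 0 ≤ C ∧ ∀ A : E →L[ℝ] E, |A.det| ≤ C * ‖A‖ ^ finrank ℝ E := by
  have : ProperSpace (E →L[ℝ] E) := FiniteDimensional.proper ℝ _
  obtain ⟨C, hC⟩ := (isCompact_closedBall (0 : E →L[ℝ] E) 1).bddAbove_image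
    ContinuousLinearMap.continuous_det.abs.continuousOn
  have hball : ∀ A : E →L[ℝ] E, ‖A‖ ≤ 1 → |A.det| ≤ C :=
    fun A hA => hC ⟨A, by simpa using hA, rfl⟩
  refine ⟨C, (abs_nonneg _).trans (hball 0 (by simp)), fun A => ?_⟩
  have hdet : ∀ (c : ℝ) (B : E →L[ℝ] E), (c • B).det = c ^ finrank ℝ E * B.det := fun c B => by
    simp [ContinuousLinearMap.det]
  have hsmul : A = ‖A‖ • normalize A := (norm_smul_normalize A).symm
  calc |A.det| = ‖A‖ ^ finrank ℝ E * |(normalize A).det| := by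
        conv_lhs => rw [hsmul, hdet, abs_mul, abs_pow, abs_norm]
    _ ≤ ‖A‖ ^ finrank ℝ E * C := by gcongr; exact hball _ (norm_normalize_le_one A)
    _ = C * ‖A‖ ^ finrank ℝ E := mul_comm _ _

theorem tendsto_abs_det_mul_exp_neg_cocompact {F : (E →L[ℝ] E) → ℝ} {a b : ℝ} (ha : 0 < a)
    (hF : ∀ A, a * ‖A‖ - b ≤ F A) :
    Filter.Tendsto (fun A => |A.det| * Real.exp (-F A)) (Filter.cocompact _) (nhds 0) := by
  have : ProperSpace (E →L[ℝ] E) := FiniteDimensional.proper ℝ _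
  obtain ⟨C, hC0, hC⟩ := exists_abs_det_le_mul_norm_pow (E := E)
  set d := finrank ℝ E
  have hbound : ∀ A : E →L[ℝ] E, |A.det| * Real.exp (-F A) ≤
      C / a ^ d * Real.exp b * ((a * ‖A‖) ^ d * Real.exp (-(a * ‖A‖))) := fun A =>
    calc |A.det| * Real.exp (-F A) ≤ C * ‖A‖ ^ d * Real.exp (b + -(a * ‖A‖)) := by
          gcongr
          exacts [hC A, by linarith [hF A]]
      _ = C / a ^ d * Real.exp b * ((a * ‖A‖) ^ d * Real.exp (-(a * ‖A‖))) := by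
          rw [Real.exp_add, mul_pow]; field_simp
  have hnorm : Filter.Tendsto (fun A : E →L[ℝ] E => a * ‖A‖) (Filter.cocompact _) Filter.atTop :=
    (tendsto_norm_cocompact_atTop (E := E →L[ℝ] E)).const_mul_atTop ha
  have hlim := ((Real.tendsto_pow_mul_exp_neg_atTop_nhds_zero d).comp hnorm).const_mul
    (C / a ^ d * Real.exp b)
  rw [mul_zero] at hlim
  exact squeeze_zero (fun A => by positivity) hbound hlim

theorem exists_forall_log_abs_det_le {F : (E →L[ℝ] E) → ℝ} (hFc : Continuous F) {a b : ℝ}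
    (ha : 0 < a) (hF : ∀ A, a * ‖A‖ - b ≤ F A) :
    ∃ A : E →L[ℝ] E, A.det ≠ 0 ∧
      ∀ B : E →L[ℝ] E, B.det ≠ 0 → Real.log |B.det| ≤ F (B.comp A) - F A := by
  have hcont : Continuous fun A : E →L[ℝ] E => |A.det| * Real.exp (-F A) :=
    ContinuousLinearMap.continuous_det.abs.mul (Real.continuous_exp.comp hFc.neg)
  have hid : 0 < |(ContinuousLinearMap.id ℝ E).det| *
      Real.exp (-F (ContinuousLinearMap.id ℝ E)) := by
    simp [ContinuousLinearMap.det, Real.exp_pos]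
  obtain ⟨A, hA⟩ := hcont.exists_forall_ge' (ContinuousLinearMap.id ℝ E)
    ((tendsto_abs_det_mul_exp_neg_cocompact ha hF).eventually_le_const hid)
  have hdet : 0 < |A.det| := pos_of_mul_pos_left (hid.trans_le (hA _)) (Real.exp_pos _).le
  refine ⟨A, abs_pos.1 hdet, fun B hB => ?_⟩
  have hmul : (B.comp A).det = B.det * A.det := by simp [ContinuousLinearMap.det]
  have hle := Real.log_le_log (by rw [hmul, abs_mul]; positivity) (hA (B.comp A))
  rw [hmul, abs_mul, Real.log_mul (by positivity) (Real.exp_pos _).ne',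
    Real.log_mul (by positivity) hdet.ne', Real.log_mul hdet.ne' (Real.exp_pos _).ne',
    Real.log_exp, Real.log_exp] at hle
  linarith

theorem exists_pos_forall_mul_norm_le_sum_norm {ι : Type*} [Fintype ι] {u : ι → E}
    (hu : Submodule.span ℝ (Set.range u) = ⊤) :
    ∃ a : ℝ, 0 < a ∧ ∀ A : E →L[ℝ] E, a * ‖A‖ ≤ ∑ i, ‖A (u i)‖ := by
  let eval : (E →L[ℝ] E) →ₗ[ℝ] (ι → E) :=
    { toFun := fun A i => A (u i), map_add' := fun _ _ => rfl, map_smul' := fun _ _ => rfl }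
  have hker : LinearMap.ker eval = ⊥ := LinearMap.ker_eq_bot'.2 fun A hA =>
    ContinuousLinearMap.coe_injective (LinearMap.ext_on_range hu fun i => congrFun hA i)
  obtain ⟨K, hK0, hK⟩ := LinearMap.exists_antilipschitzWith eval hker
  have hK0' : (0 : ℝ) < K := by exact_mod_cast hK0
  refine ⟨(K : ℝ)⁻¹, inv_pos.2 hK0', fun A => ?_⟩
  rw [inv_mul_le_iff₀ hK0']
  calc ‖A‖ ≤ K * ‖eval A‖ := by simpa using hK.le_mul_dist A 0
    _ ≤ K * ∑ i, ‖A (u i)‖ := by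
        gcongr
        refine (pi_norm_le_iff_of_nonneg (by positivity)).2 fun i => ?_
        exact Finset.single_le_sum (f := fun i => ‖A (u i)‖) (fun i _ => norm_nonneg _)
          (Finset.mem_univ i)

end DeterminantMaximizer

section LewisPosition

open Module NormedSpace

variable {E : Type*} [NormedAddCommGroup E] [InnerProductSpace ℝ E]
  {Φ : ℝ → ℝ} {r : ℝ} {q : ℕ} {ι : Type*} [Fintype ι]

/-- A Lewis position of the measure `∑ μ i • δ_i` and the vectors `u i`: the density `Φ ‖u i‖` has
bounded mass, and the directions of the `u i` are spread out in the sense that they dominate the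
Euclidean norm. For the vectors of an `N`-dimensional space `R ^ r` is a constant times `N`; the
factor `32` makes `R` a bound for the norm on the unit modular ball. -/
structure LewisPosition (Φ : ℝ → ℝ) (r R : ℝ) (μ : ι → ℝ) (u : ι → E) : Prop where
  sum_le_two : ∑ i, μ i * Φ ‖u i‖ ≤ 2
  norm_sq_le : ∀ v : E,
    ‖v‖ ^ 2 ≤ R ^ r / 32 * ∑ i, μ i * Φ ‖u i‖ * inner ℝ v (normalize (u i)) ^ 2

theorem pow_le_one_add_mul_sub_one {y : ℝ} (h1 : 1 ≤ y) (h2 : y ≤ 2) (q : ℕ) :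
    y ^ q ≤ 1 + (2 ^ q - 1) * (y - 1) := by
  induction q with
  | zero => simp
  | succ k ih =>
    have hk : (1 : ℝ) ≤ 2 ^ k := one_le_pow₀ one_le_two
    calc y ^ (k + 1) ≤ y * (1 + (2 ^ k - 1) * (y - 1)) := by
          rw [pow_succ']; gcongr
      _ ≤ 1 + (2 ^ (k + 1) - 1) * (y - 1) := by
          rw [pow_succ]
          nlinarith [mul_nonneg (mul_nonneg (sub_nonneg.2 hk) (sub_nonneg.2 h1)) (sub_nonneg.2 h2)]

theorem inner_eq_norm_mul_inner_normalize (v x : E) :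
    inner ℝ v x = ‖x‖ * inner ℝ v (normalize x) := by
  rw [← real_inner_smul_right, norm_smul_normalize]

theorem abs_inner_normalize_le (v x : E) : |inner ℝ v (normalize x)| ≤ ‖v‖ :=
  (abs_real_inner_le_norm v _).trans
    (mul_le_of_le_one_right (norm_nonneg v) (norm_normalize_le_one x))

theorem norm_add_inner_smul_sq {v : E} (hv : ‖v‖ = 1) (z : E) :
    ‖z + inner ℝ v z • v‖ ^ 2 = ‖z‖ ^ 2 * (1 + 3 * inner ℝ v (normalize z) ^ 2) := by
  rw [norm_add_sq_real, inner_smul_right, norm_smul, hv, mul_one, real_inner_comm v z,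
    inner_eq_norm_mul_inner_normalize v z, Real.norm_eq_abs, sq_abs]
  ring

theorem PowerGrowth.map_norm_add_inner_smul_sub_le (hΦ : PowerGrowth Φ r q) {v : E}
    (hv : ‖v‖ = 1) (z : E) :
    Φ ‖z + inner ℝ v z • v‖ - Φ ‖z‖ ≤ 2 ^ (q + 1) * (Φ ‖z‖ * inner ℝ v (normalize z) ^ 2) := by
  set g : ℝ := inner ℝ v (normalize z)
  have hg1 : g ^ 2 ≤ 1 := (sq_le_one_iff_abs_le_one _).2 (hv ▸ abs_inner_normalize_le v z)
  set y := √(1 + 3 * g ^ 2)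
  have hy_sq : y ^ 2 = 1 + 3 * g ^ 2 := Real.sq_sqrt (by positivity)
  have hy1 : 1 ≤ y := Real.one_le_sqrt.2 (by nlinarith)
  have hy2 : y ≤ 2 := by nlinarith
  have hnorm : ‖z + inner ℝ v z • v‖ = y * ‖z‖ := by
    rw [← sq_eq_sq₀ (norm_nonneg _) (by positivity), norm_add_inner_smul_sq hv, mul_pow, hy_sq,
      mul_comm]
  have hy_pow : y ^ q - 1 ≤ 2 ^ (q + 1) * g ^ 2 := by
    have hchord := pow_le_one_add_mul_sub_one hy1 hy2 q
    have : (2 ^ q - 1) * (y - 1) ≤ 2 ^ q * (2 * g ^ 2) :=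
      mul_le_mul (by linarith) (by nlinarith) (by linarith) (by positivity)
    rw [pow_succ]; linarith
  rw [hnorm]
  calc Φ (y * ‖z‖) - Φ ‖z‖ ≤ (y ^ q - 1) * Φ ‖z‖ := by
        linarith [hΦ.le_pow_mul y ‖z‖ hy1 (norm_nonneg z)]
    _ ≤ 2 ^ (q + 1) * g ^ 2 * Φ ‖z‖ := by gcongr; exact hΦ.nonneg (norm_nonneg z)
    _ = 2 ^ (q + 1) * (Φ ‖z‖ * g ^ 2) := by ring

variable [FiniteDimensional ℝ E]

theorem exists_dilation_transvection (v : E) :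
    ∃ B : E →L[ℝ] E, (∀ x, B x = x + inner ℝ v x • v) ∧ B.det = 1 + ‖v‖ ^ 2 := by
  refine ⟨LinearMap.toContinuousLinearMap (LinearMap.transvection (innerSL ℝ v : E →ₗ[ℝ] ℝ) v),
    fun x => by simp [LinearMap.transvection], ?_⟩
  simp [ContinuousLinearMap.det]

variable {μ : ι → ℝ} {u : ι → E}

theorem exists_pos_forall_mul_norm_sub_le_sum (hΦ : PowerGrowth Φ r q) (hμ : ∀ i, 0 < μ i)
    (hu : Submodule.span ℝ (Set.range u) = ⊤) :
    ∃ a b : ℝ, 0 < a ∧ ∀ A : E →L[ℝ] E, a * ‖A‖ - b ≤ ∑ i, μ i * Φ ‖A (u i)‖ := by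
  obtain ⟨a, ha, hnorm⟩ := exists_pos_forall_mul_norm_le_sum_norm hu
  obtain ⟨c, hc, hcμ⟩ : ∃ c : ℝ, 0 < c ∧ ∀ i, c ≤ μ i := by
    rcases isEmpty_or_nonempty ι with hι | hι
    · exact ⟨1, one_pos, hι.elim⟩
    · obtain ⟨i₀, hi₀⟩ := Finite.exists_min μ
      exact ⟨μ i₀, hμ i₀, hi₀⟩
  have hΦ1 := hΦ.pos 1 one_pos
  refine ⟨Φ 1 * (c * a), Φ 1 * ∑ i, μ i, by positivity, fun A => ?_⟩
  calc Φ 1 * (c * a) * ‖A‖ - Φ 1 * ∑ i, μ i = Φ 1 * (c * (a * ‖A‖)) - Φ 1 * ∑ i, μ i := by ring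
    _ ≤ Φ 1 * ∑ i, μ i * ‖A (u i)‖ - Φ 1 * ∑ i, μ i := by
        gcongr
        calc c * (a * ‖A‖) ≤ c * ∑ i, ‖A (u i)‖ := by gcongr; exact hnorm A
          _ ≤ ∑ i, μ i * ‖A (u i)‖ := by rw [Finset.mul_sum]; gcongr with i; exact hcμ i
    _ = ∑ i, μ i * (Φ 1 * (‖A (u i)‖ - 1)) := by
        rw [Finset.mul_sum, Finset.mul_sum, ← Finset.sum_sub_distrib]
        exact Finset.sum_congr rfl fun i _ => by ring
    _ ≤ ∑ i, μ i * Φ ‖A (u i)‖ := by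
        gcongr with i
        exacts [(hμ i).le, hΦ.map_one_mul_sub_one_le (norm_nonneg _)]

theorem exists_maximizer_log_abs_det (hΦ : PowerGrowth Φ r q) (hμ : ∀ i, 0 < μ i)
    (hu : Submodule.span ℝ (Set.range u) = ⊤) (hE : 0 < finrank ℝ E) :
    ∃ A : E →L[ℝ] E, A.det ≠ 0 ∧ ∀ B : E →L[ℝ] E, B.det ≠ 0 → Real.log |B.det| ≤
      finrank ℝ E * (∑ i, μ i * Φ ‖B (A (u i))‖ - ∑ i, μ i * Φ ‖A (u i)‖) := by
  obtain ⟨a, b, ha, hab⟩ := exists_pos_forall_mul_norm_sub_le_sum hΦ hμ hu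
  have hd : (0 : ℝ) < finrank ℝ E := by exact_mod_cast hE
  obtain ⟨A, hA, hmax⟩ := exists_forall_log_abs_det_le
    (F := fun A : E →L[ℝ] E => finrank ℝ E * ∑ i, μ i * Φ ‖A (u i)‖)
    (continuous_const.mul (continuous_finsetSum _ fun i _ => continuous_const.mul
      (hΦ.continuous_comp_norm.comp (by fun_prop))))
    (mul_pos hd ha) (b := finrank ℝ E * b) fun A => by
      calc finrank ℝ E * a * ‖A‖ - finrank ℝ E * b = finrank ℝ E * (a * ‖A‖ - b) := by ring
        _ ≤ _ := by gcongr; exact hab A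
  exact ⟨A, hA, fun B hB => (hmax B hB).trans_eq (mul_sub _ _ _).symm⟩

theorem sum_map_norm_le_two_of_maximizer (hΦ : PowerGrowth Φ r q) (hμ : ∀ i, 0 ≤ μ i)
    (hE : 0 < finrank ℝ E)
    (hmax : ∀ B : E →L[ℝ] E, B.det ≠ 0 → Real.log |B.det| ≤
      finrank ℝ E * (∑ i, μ i * Φ ‖B (u i)‖ - ∑ i, μ i * Φ ‖u i‖)) :
    ∑ i, μ i * Φ ‖u i‖ ≤ 2 := by
  have hdet : ((2⁻¹ : ℝ) • ContinuousLinearMap.id ℝ E).det = 2⁻¹ ^ finrank ℝ E := by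
    simp [ContinuousLinearMap.det]
  -- Compare with the dilation by `1 / 2`.
  have hle := hmax ((2⁻¹ : ℝ) • ContinuousLinearMap.id ℝ E) (by rw [hdet]; positivity)
  have hhalf : ∑ i, μ i * Φ ‖((2⁻¹ : ℝ) • ContinuousLinearMap.id ℝ E) (u i)‖ ≤
      2⁻¹ * ∑ i, μ i * Φ ‖u i‖ := by
    rw [Finset.mul_sum]
    refine Finset.sum_le_sum fun i _ => ?_
    have hscale := hΦ.map_mul_le_div_mul (norm_nonneg (u i)) (by norm_num)
      (by norm_num : (2⁻¹ : ℝ) ≤ 1)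
    rw [mul_one, div_one] at hscale
    have hnorm : ‖((2⁻¹ : ℝ) • ContinuousLinearMap.id ℝ E) (u i)‖ = ‖u i‖ * 2⁻¹ := by
      simp [norm_smul, mul_comm]
    rw [hnorm, mul_left_comm]
    exact mul_le_mul_of_nonneg_left hscale (hμ i)
  have hd : (0 : ℝ) < finrank ℝ E := by exact_mod_cast hE
  rw [hdet, abs_of_pos (by positivity), Real.log_pow, Real.log_inv] at hle
  have := le_of_mul_le_mul_left hle hd
  linarith [Real.log_two_lt_d9]

theorem norm_sq_le_sum_inner_sq_of_maximizer (hΦ : PowerGrowth Φ r q) (hμ : ∀ i, 0 ≤ μ i)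
    (hmax : ∀ B : E →L[ℝ] E, B.det ≠ 0 → Real.log |B.det| ≤
      finrank ℝ E * (∑ i, μ i * Φ ‖B (u i)‖ - ∑ i, μ i * Φ ‖u i‖)) (v : E) :
    ‖v‖ ^ 2 ≤ finrank ℝ E * 2 ^ (q + 2) *
      ∑ i, μ i * Φ ‖u i‖ * inner ℝ v (normalize (u i)) ^ 2 := by
  have hunit : ∀ v : E, ‖v‖ = 1 → 1 ≤ finrank ℝ E * 2 ^ (q + 2) *
      ∑ i, μ i * Φ ‖u i‖ * inner ℝ v (normalize (u i)) ^ 2 := by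
    intro v hv
    -- Compare with the dilation by `2` in the direction `v`.
    obtain ⟨B, hB, hdet⟩ := exists_dilation_transvection v
    have hdet2 : B.det = 2 := by rw [hdet, hv]; norm_num
    have hle := hmax B (by rw [hdet2]; exact two_ne_zero)
    rw [hdet2, abs_two, ← Finset.sum_sub_distrib] at hle
    have hincr : ∑ i, (μ i * Φ ‖B (u i)‖ - μ i * Φ ‖u i‖) ≤
        2 ^ (q + 1) * ∑ i, μ i * Φ ‖u i‖ * inner ℝ v (normalize (u i)) ^ 2 := by
      rw [Finset.mul_sum]
      refine Finset.sum_le_sum fun i _ => ?_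
      have := mul_le_mul_of_nonneg_left (hΦ.map_norm_add_inner_smul_sub_le hv (u i)) (hμ i)
      rw [hB]
      linarith
    have := mul_le_mul_of_nonneg_left hincr (Nat.cast_nonneg (α := ℝ) (finrank ℝ E))
    rw [pow_succ]
    linarith [Real.log_two_gt_d9]
  rcases eq_or_ne v 0 with rfl | hv
  · simp
  calc ‖v‖ ^ 2 = ‖v‖ ^ 2 * 1 := (mul_one _).symm
    _ ≤ ‖v‖ ^ 2 * (finrank ℝ E * 2 ^ (q + 2) *
          ∑ i, μ i * Φ ‖u i‖ * inner ℝ (normalize v) (normalize (u i)) ^ 2) := by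
        gcongr; exact hunit _ (norm_normalize hv)
    _ = finrank ℝ E * 2 ^ (q + 2) * ∑ i, μ i * Φ ‖u i‖ * inner ℝ v (normalize (u i)) ^ 2 := by
        rw [mul_left_comm, Finset.mul_sum]
        congr 1
        refine Finset.sum_congr rfl fun i _ => ?_
        conv_rhs => rw [← norm_smul_normalize v, real_inner_smul_left]
        ring

theorem exists_lewisPosition (hΦ : PowerGrowth Φ r q) (hμ : ∀ i, 0 < μ i)
    (hE : 0 < finrank ℝ E) (hu : Submodule.span ℝ (Set.range u) = ⊤) {R : ℝ}
    (hR : 2 ^ (q + 7) * finrank ℝ E ≤ R ^ r) :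
    ∃ A : E →L[ℝ] E, A.det ≠ 0 ∧ LewisPosition Φ r R μ (fun i => A (u i)) := by
  obtain ⟨A, hA, hmax⟩ := exists_maximizer_log_abs_det hΦ hμ hu hE
  have hμ0 : ∀ i, 0 ≤ μ i := fun i => (hμ i).le
  refine ⟨A, hA, sum_map_norm_le_two_of_maximizer hΦ hμ0 hE hmax, fun v => ?_⟩
  refine (norm_sq_le_sum_inner_sq_of_maximizer hΦ hμ0 hmax v).trans ?_
  refine mul_le_mul_of_nonneg_right ?_ (Finset.sum_nonneg fun i _ =>
    mul_nonneg (mul_nonneg (hμ0 i) (hΦ.nonneg (norm_nonneg _))) (sq_nonneg _))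
  rw [pow_add] at hR ⊢
  linarith

end LewisPosition

/-! ### Dual Sudakov minoration -/

theorem exists_finset_isCover_of_forall_isSeparated_card_le {X : Type*} {U : SetRel X X} [U.IsRefl]
    [U.IsSymm] {S : Set X} {b : ℝ}
    (hb : ∀ T : Finset X, ↑T ⊆ S → U.IsSeparated (T : Set X) → T.card ≤ b) :
    ∃ T : Finset X, ↑T ⊆ S ∧ T.card ≤ b ∧ U.IsCover S T := by
  classical
  let cards := {k | ∃ T : Finset X, ↑T ⊆ S ∧ U.IsSeparated (T : Set X) ∧ T.card = k}
  have hbdd : BddAbove cards := ⟨⌊b⌋₊, by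
    rintro _ ⟨T, hTS, hT, rfl⟩
    exact Nat.le_floor (hb T hTS hT)⟩
  obtain ⟨T, hTS, hT, hcard⟩ := Nat.sSup_mem ⟨0, show 0 ∈ cards from ⟨∅, by simp⟩⟩ hbdd
  refine ⟨T, hTS, hb T hTS hT, fun v hv => ?_⟩
  by_contra! hfar
  have hvT : v ∉ T := fun hvT => hfar v hvT U.rfl
  have hinsert : T.card + 1 ∈ cards := ⟨insert v T,
    by simpa [Set.insert_subset_iff] using ⟨hv, hTS⟩,
    by simpa using hT.insert fun w hw hvw => (hfar w hw hvw).elim,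
    Finset.card_insert_of_notMem hvT⟩
  have := le_csSup hbdd hinsert
  omega

section DualSudakov

variable {E : Type*} [NormedAddCommGroup E] [InnerProductSpace ℝ E] {ι : Type*} {a : ι → E}

theorem isClosed_forall_abs_inner_le (a : ι → E) (t : ℝ) :
    IsClosed {v | ∀ j, |inner ℝ v (a j)| ≤ t} := by
  rw [Set.ofPred_forall]
  exact isClosed_iInter fun j => isClosed_le (by fun_prop) continuous_const

theorem disjoint_translate_slab {ε t : ℝ} {x y : E} {j : ι} (ht : 0 < t) (hε : 0 < ε)
    (hj : ε < |inner ℝ (x - y) (a j)|) :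
    Disjoint {v | ∀ j, |inner ℝ (v + (2 * t / ε) • x) (a j)| ≤ t}
      {v | ∀ j, |inner ℝ (v + (2 * t / ε) • y) (a j)| ≤ t} := by
  refine Set.disjoint_left.2 fun v hx hy => ?_
  have hdiff : inner ℝ (v + (2 * t / ε) • x) (a j) - inner ℝ (v + (2 * t / ε) • y) (a j) =
      2 * t / ε * inner ℝ (x - y) (a j) := by
    rw [← inner_sub_left, ← real_inner_smul_left]
    congr 1
    module
  have hle := (abs_sub _ _).trans (add_le_add (hx j) (hy j))
  rw [hdiff, abs_mul, abs_of_pos (by positivity)] at hle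
  have := mul_lt_mul_of_pos_left hj (show 0 < 2 * t / ε by positivity)
  rw [div_mul_cancel₀ _ hε.ne'] at this
  linarith

section Gaussian

variable [FiniteDimensional ℝ E] [MeasurableSpace E] [BorelSpace E]

variable (E) in
/-- The standard Gaussian measure of a Euclidean space, given by its density so that translations
act on it explicitly. -/
noncomputable def gaussianDensityMeasure : Measure E :=
  (volume : Measure E).tilted fun v => -‖v‖ ^ 2 / 2

theorem integrable_exp_neg_norm_sq_div_two :
    Integrable (fun v : E => Real.exp (-‖v‖ ^ 2 / 2)) := by
  refine (GaussianFourier.integrable_cexp_neg_mul_sq_norm_add (V := E) (b := (1 / 2 : ℂ))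
    (by norm_num) 0 0).norm.congr (.of_forall fun v => ?_)
  have : -(1 / 2 : ℂ) * (‖v‖ : ℂ) ^ 2 + 0 * (inner ℝ 0 v : ℝ) = ((-‖v‖ ^ 2 / 2 : ℝ) : ℂ) := by
    push_cast; ring
  simp only [this, Complex.norm_exp_ofReal]

instance : IsProbabilityMeasure (gaussianDensityMeasure E) :=
  isProbabilityMeasure_tilted integrable_exp_neg_norm_sq_div_two

theorem integral_gaussianDensityMeasure (f : E → ℝ) :
    ∫ v, f v ∂gaussianDensityMeasure E =
      ∫ v, Real.exp (-‖v‖ ^ 2 / 2) / (∫ w : E, Real.exp (-‖w‖ ^ 2 / 2)) * f v :=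
  integral_tilted _ f

theorem integral_gaussianDensityMeasure_comp_neg (f : E → ℝ) :
    ∫ v, f (-v) ∂gaussianDensityMeasure E = ∫ v, f v ∂gaussianDensityMeasure E := by
  simp only [integral_gaussianDensityMeasure]
  rw [← integral_neg_eq_self]
  simp only [norm_neg, neg_neg]

theorem integral_gaussianDensityMeasure_comp_add (f : E → ℝ) (y : E) :
    ∫ v, f (v + y) ∂gaussianDensityMeasure E =
      Real.exp (-‖y‖ ^ 2 / 2) * ∫ v, Real.exp (inner ℝ v y) * f v ∂gaussianDensityMeasure E := by
  simp only [integral_gaussianDensityMeasure]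
  rw [← integral_sub_right_eq_self _ y, ← integral_const_mul]
  congr 1 with v
  have hexp : Real.exp (-‖v - y‖ ^ 2 / 2) =
      Real.exp (-‖y‖ ^ 2 / 2) * (Real.exp (-‖v‖ ^ 2 / 2) * Real.exp (inner ℝ v y)) := by
    rw [← Real.exp_add, ← Real.exp_add, norm_sub_sq_real]
    ring_nf
  rw [hexp, sub_add_cancel]
  ring

theorem integral_exp_inner_gaussianDensityMeasure (y : E) :
    ∫ v, Real.exp (inner ℝ v y) ∂gaussianDensityMeasure E = Real.exp (‖y‖ ^ 2 / 2) := by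
  have h := integral_gaussianDensityMeasure_comp_add (fun _ => 1) y
  simp only [integral_const, probReal_univ, one_smul, mul_one] at h
  rw [neg_div, Real.exp_neg, eq_inv_mul_iff_mul_eq₀ (Real.exp_ne_zero _), mul_one] at h
  exact h.symm

theorem integrable_exp_inner_gaussianDensityMeasure (y : E) :
    Integrable (fun v => Real.exp (inner ℝ v y)) (gaussianDensityMeasure E) := by
  refine not_imp_comm.1 integral_undef ?_
  rw [integral_exp_inner_gaussianDensityMeasure]
  exact Real.exp_ne_zero _

theorem gaussianDensityMeasure_real_le_inner_le {a : E} (ha : ‖a‖ ≤ 1) {t : ℝ} (ht : 0 ≤ t) :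
    (gaussianDensityMeasure E).real {v | t ≤ inner ℝ v a} ≤ Real.exp (-(t ^ 2 / 2)) := by
  have hsmul : ∀ v : E, t * inner ℝ v a = inner ℝ v (t • a) := fun v =>
    (real_inner_smul_right v a t).symm
  have hmarkov := ProbabilityTheory.measure_ge_le_exp_mul_mgf (X := fun v : E => inner ℝ v a) t ht
    (by simpa only [hsmul] using integrable_exp_inner_gaussianDensityMeasure (t • a))
  simp only [ProbabilityTheory.mgf, hsmul, integral_exp_inner_gaussianDensityMeasure,
    ← Real.exp_add] at hmarkov
  refine hmarkov.trans (Real.exp_le_exp.2 ?_)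
  have hnorm : ‖t • a‖ ^ 2 ≤ t ^ 2 := by
    gcongr
    simpa [norm_smul, abs_of_nonneg ht] using mul_le_of_le_one_right ht ha
  linarith

variable [Fintype ι]

theorem half_le_gaussianDensityMeasure_real_slab (ha : ∀ j, ‖a j‖ ≤ 1) {t : ℝ} (ht : 0 ≤ t)
    (hcard : 4 * Fintype.card ι * Real.exp (-(t ^ 2 / 2)) ≤ 1) :
    1 / 2 ≤ (gaussianDensityMeasure E).real {v | ∀ j, |inner ℝ v (a j)| ≤ t} := by
  set γ := gaussianDensityMeasure E
  set S : Set E := {v | ∀ j, |inner ℝ v (a j)| ≤ t}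
  have hcompl : Sᶜ ⊆ ⋃ j, ({v | t ≤ inner ℝ v (a j)} ∪ {v | t ≤ inner ℝ v (-a j)}) := by
    intro v hv
    obtain ⟨j, hj⟩ : ∃ j, t < |inner ℝ v (a j)| := by simpa [S] using hv
    refine Set.mem_iUnion.2 ⟨j, (lt_abs.1 hj).imp le_of_lt fun h => ?_⟩
    simpa using h.le
  have htail : γ.real Sᶜ ≤ ∑ _j : ι, 2 * Real.exp (-(t ^ 2 / 2)) :=
    (measureReal_mono hcompl).trans <| (measureReal_iUnion_fintype_le _).trans <|
      Finset.sum_le_sum fun j _ => (measureReal_union_le _ _).trans <| by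
        linarith [gaussianDensityMeasure_real_le_inner_le (ha j) ht,
          gaussianDensityMeasure_real_le_inner_le (a := -a j) (by simpa using ha j) ht]
  rw [Finset.sum_const, Finset.card_univ, nsmul_eq_mul,
    probReal_compl_eq_one_sub (isClosed_forall_abs_inner_le a t).measurableSet] at htail
  linarith

theorem exp_mul_le_gaussianDensityMeasure_real_translate {S : Set E} (hS : MeasurableSet S)
    (hneg : ∀ v, -v ∈ S ↔ v ∈ S) (y : E) :
    Real.exp (-‖y‖ ^ 2 / 2) * (gaussianDensityMeasure E).real S ≤
      (gaussianDensityMeasure E).real {v | v + y ∈ S} := by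
  set γ := gaussianDensityMeasure E
  have hintegrable : ∀ z : E, Integrable (fun v => Real.exp (inner ℝ v z) * S.indicator 1 v) γ :=
    fun z => ((integrable_exp_inner_gaussianDensityMeasure z).indicator hS).congr <|
      .of_forall fun v => by by_cases hv : v ∈ S <;> simp [hv]
  have hind : ∀ v, S.indicator (1 : E → ℝ) (-v) = S.indicator 1 v := fun v => by
    by_cases hv : v ∈ S <;> simp [hv, hneg]
  have hsymm : ∫ v, Real.exp (inner ℝ v (-y)) * S.indicator 1 v ∂γ =
      ∫ v, Real.exp (inner ℝ v y) * S.indicator 1 v ∂γ := by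
    rw [← integral_gaussianDensityMeasure_comp_neg]
    simp only [inner_neg_neg, hind, γ]
  -- Averaging over `y` and `-y` replaces `exp ⟨v, y⟩` by `cosh ⟨v, y⟩ ≥ 1`.
  have hcosh : 2 * γ.real S ≤ ∫ v, Real.exp (inner ℝ v y) * S.indicator 1 v ∂γ +
      ∫ v, Real.exp (inner ℝ v (-y)) * S.indicator 1 v ∂γ := by
    rw [← integral_add (hintegrable y) (hintegrable (-y)),
      ← integral_indicator_one hS, ← integral_const_mul]
    refine integral_mono (((integrable_const 1).indicator hS).const_mul 2)
      ((hintegrable y).add (hintegrable (-y))) fun v => ?_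
    by_cases hv : v ∈ S
    · simp only [Set.indicator_of_mem hv, Pi.one_apply, mul_one, inner_neg_right]
      linarith [Real.add_one_le_exp (inner ℝ v y), Real.add_one_le_exp (-inner ℝ v y)]
    · simp [Set.indicator_of_notMem hv]
  have htranslate : γ.real {v | v + y ∈ S} = ∫ v, S.indicator 1 (v + y) ∂γ :=
    (integral_indicator_one (measurable_add_const y hS)).symm
  rw [htranslate, integral_gaussianDensityMeasure_comp_add]
  gcongr
  linarith

theorem card_le_of_separated (ha : ∀ j, ‖a j‖ ≤ 1) {n : ℝ} (hn : 1 ≤ n)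
    (hcard : Fintype.card ι ≤ n) {c : E} {ρ ε : ℝ} (hε : 0 < ε) {T : Finset E}
    (hT : ∀ v ∈ T, ‖v - c‖ ≤ ρ)
    (hsep : (T : Set E).Pairwise fun v w => ∃ j, ε < |inner ℝ (v - w) (a j)|) :
    (T.card : ℝ) ≤ 2 * Real.exp (4 * Real.log (4 * n) * ρ ^ 2 / ε ^ 2) := by
  set t := √(2 * Real.log (4 * n))
  have hlog : 0 < Real.log (4 * n) := Real.log_pos (by linarith)
  have ht0 : 0 < t := Real.sqrt_pos.2 (by positivity)
  have ht2 : t ^ 2 = 2 * Real.log (4 * n) := Real.sq_sqrt (by positivity)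
  set S : Set E := {v | ∀ j, |inner ℝ v (a j)| ≤ t}
  have hS : MeasurableSet S := (isClosed_forall_abs_inner_le a t).measurableSet
  set y : E → E := fun x => (2 * t / ε) • (x - c)
  have hmass : ∑ x ∈ T, (gaussianDensityMeasure E).real {v | v + y x ∈ S} ≤ 1 := by
    rw [← probReal_univ (μ := gaussianDensityMeasure E)]
    refine sum_measureReal_le_measureReal_univ (fun x _ => measurable_add_const (y x) hS)
      fun x hx x₂ hx₂ hne => ?_
    obtain ⟨j, hj⟩ := hsep hx hx₂ hne
    exact disjoint_translate_slab (a := a) ht0 hε (by simpa using hj)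
  have hslab : 1 / 2 ≤ (gaussianDensityMeasure E).real S := by
    refine half_le_gaussianDensityMeasure_real_slab ha ht0.le ?_
    rw [ht2, mul_div_cancel_left₀ _ two_ne_zero, Real.exp_neg, Real.exp_log (by positivity),
      mul_inv_le_iff₀ (by positivity)]
    linarith
  have hterm : ∀ x ∈ T, (2 * Real.exp (4 * Real.log (4 * n) * ρ ^ 2 / ε ^ 2))⁻¹ ≤
      (gaussianDensityMeasure E).real {v | v + y x ∈ S} := fun x hx => by
    refine le_trans ?_
      (exp_mul_le_gaussianDensityMeasure_real_translate hS (fun v => by simp [S]) (y x))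
    have hy : ‖y x‖ ^ 2 / 2 ≤ 4 * Real.log (4 * n) * ρ ^ 2 / ε ^ 2 := by
      have hx' : ‖x - c‖ ^ 2 ≤ ρ ^ 2 := by gcongr; exact hT x hx
      calc ‖y x‖ ^ 2 / 2 = 4 * Real.log (4 * n) * ‖x - c‖ ^ 2 / ε ^ 2 := by
            simp only [y, norm_smul, mul_pow, Real.norm_eq_abs, sq_abs, div_pow, ht2]; ring
        _ ≤ _ := by gcongr
    rw [mul_inv, ← Real.exp_neg, mul_comm, ← one_div, neg_div]
    gcongr
  have hsum := (Finset.sum_le_sum hterm).trans hmass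
  rwa [Finset.sum_const, nsmul_eq_mul, mul_inv_le_iff₀ (by positivity), one_mul] at hsum

end Gaussian

theorem exists_finset_net [FiniteDimensional ℝ E] [Fintype ι] (ha : ∀ j, ‖a j‖ ≤ 1) {n : ℝ}
    (hn : 1 ≤ n) (hcard : Fintype.card ι ≤ n) {c : E} {ρ ε : ℝ} (hε : 0 < ε) {S : Set E}
    (hS : ∀ v ∈ S, ‖v - c‖ ≤ ρ) :
    ∃ T : Finset E, ↑T ⊆ S ∧ T.card ≤ 2 * Real.exp (4 * Real.log (4 * n) * ρ ^ 2 / ε ^ 2) ∧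
      ∀ v ∈ S, ∃ w ∈ T, ∀ j, |inner ℝ (v - w) (a j)| ≤ ε := by
  borelize E
  let near : SetRel E E := {z | ∀ j, |inner ℝ (z.1 - z.2) (a j)| ≤ ε}
  have : near.IsRefl := ⟨fun v j => by simpa using hε.le⟩
  have : near.IsSymm := ⟨fun v w h j => by
    rw [← neg_sub, inner_neg_left, abs_neg]
    exact h j⟩
  refine exists_finset_isCover_of_forall_isSeparated_card_le (U := near) fun T hTS hT =>
    card_le_of_separated ha hn hcard hε (fun v hv => hS v (hTS hv)) fun v hv w hw hvw => ?_
  simpa [near] using hT hv hw hvw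

end DualSudakov

/-! ### Random sampling -/

section RandomSampling

variable {ι : Type*} [Fintype ι] {τ : ι → ℝ}

theorem exp_neg_le_one_sub_div_two {y : ℝ} (h0 : 0 ≤ y) (h1 : y ≤ 1) :
    Real.exp (-y) ≤ 1 - y / 2 := by
  rw [Real.exp_neg, inv_le_iff_one_le_mul₀ (Real.exp_pos y)]
  nlinarith [Real.add_one_le_exp y]

theorem sum_mul_exp_neg_div_le (hτ : ∀ i, 0 ≤ τ i) (hτ1 : ∑ i, τ i = 1) {Y : ι → ℝ} {V Q : ℝ}
    (hY : ∀ i, 0 ≤ Y i) (hYV : ∀ i, Y i ≤ V) (hV : 0 < V) (hQ : Q ≤ ∑ i, τ i * Y i) :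
    ∑ i, τ i * Real.exp (-(Y i / V)) ≤ Real.exp (-(Q / (2 * V))) :=
  calc ∑ i, τ i * Real.exp (-(Y i / V)) ≤ ∑ i, τ i * (1 - Y i / V / 2) := by
        gcongr with i
        exacts [hτ i, exp_neg_le_one_sub_div_two (div_nonneg (hY i) hV.le)
          ((div_le_one hV).2 (hYV i))]
    _ = ∑ i, (τ i - τ i * Y i / (2 * V)) := Finset.sum_congr rfl fun i _ => by ring
    _ = 1 - (∑ i, τ i * Y i) / (2 * V) := by rw [Finset.sum_sub_distrib, hτ1, Finset.sum_div]
    _ ≤ 1 - Q / (2 * V) := by gcongr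
    _ ≤ Real.exp (-(Q / (2 * V))) := Real.one_sub_le_exp_neg _

theorem sum_prod_filter_sum_lt_le (hτ : ∀ i, 0 ≤ τ i) (hτ1 : ∑ i, τ i = 1) {Y : ι → ℝ} {V Q : ℝ}
    (hY : ∀ i, 0 ≤ Y i) (hYV : ∀ i, Y i ≤ V) (hV : 0 < V) (hQ : Q ≤ ∑ i, τ i * Y i) (m : ℕ) :
    ∑ x : Fin m → ι with ∑ j, Y (x j) < m * Q / 4, ∏ j, τ (x j) ≤
      Real.exp (-(m * Q / (4 * V))) := by
  have hprod : ∀ x : Fin m → ι, 0 ≤ ∏ j, τ (x j) := fun x => Finset.prod_nonneg fun j _ => hτ _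
  calc ∑ x : Fin m → ι with ∑ j, Y (x j) < m * Q / 4, ∏ j, τ (x j)
      ≤ ∑ x : Fin m → ι with ∑ j, Y (x j) < m * Q / 4,
          Real.exp (m * Q / (4 * V)) * ∏ j, τ (x j) * Real.exp (-(Y (x j) / V)) := by
        refine Finset.sum_le_sum fun x hx => ?_
        rw [Finset.prod_mul_distrib, ← Real.exp_sum, mul_left_comm, ← Real.exp_add]
        refine le_mul_of_one_le_right (hprod x) (Real.one_le_exp ?_)
        rw [Finset.sum_neg_distrib, ← Finset.sum_div, ← sub_eq_add_neg, ← div_div, ← sub_div]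
        exact div_nonneg (sub_nonneg.2 (Finset.mem_filter.1 hx).2.le) hV.le
    _ ≤ ∑ x : Fin m → ι, Real.exp (m * Q / (4 * V)) * ∏ j, τ (x j) * Real.exp (-(Y (x j) / V)) :=
        Finset.sum_le_sum_of_subset_of_nonneg (Finset.filter_subset _ _) fun x _ _ =>
          mul_nonneg (Real.exp_pos _).le
            (Finset.prod_nonneg fun j _ => mul_nonneg (hτ _) (Real.exp_pos _).le)
    _ = Real.exp (m * Q / (4 * V)) * (∑ i, τ i * Real.exp (-(Y i / V))) ^ m := by
        rw [← Finset.mul_sum, Fintype.sum_pow fun i => τ i * Real.exp (-(Y i / V))]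
    _ ≤ Real.exp (m * Q / (4 * V)) * Real.exp (-(Q / (2 * V))) ^ m := by
        gcongr
        exacts [Finset.sum_nonneg fun i _ => mul_nonneg (hτ i) (Real.exp_pos _).le,
          sum_mul_exp_neg_div_le hτ hτ1 hY hYV hV hQ]
    _ = Real.exp (-(m * Q / (4 * V))) := by
        rw [← Real.exp_nat_mul, ← Real.exp_add]
        congr 1
        field_simp
        ring

theorem exists_sample_forall_le_sum {H : Type*} (hτ : ∀ i, 0 ≤ τ i) (hτ1 : ∑ i, τ i = 1)
    {T : Finset H} {Y : H → ι → ℝ} {V Q : H → ℝ} (hY : ∀ h ∈ T, ∀ i, 0 ≤ Y h i)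
    (hYV : ∀ h ∈ T, ∀ i, Y h i ≤ V h) (hV : ∀ h ∈ T, 0 < V h)
    (hQ : ∀ h ∈ T, Q h ≤ ∑ i, τ i * Y h i) {m : ℕ}
    (hsum : ∑ h ∈ T, Real.exp (-(m * Q h / (4 * V h))) < 1) :
    ∃ x : Fin m → ι, ∀ h ∈ T, m * Q h / 4 ≤ ∑ j, Y h (x j) := by
  by_contra! hbad
  have hprod : ∀ x : Fin m → ι, 0 ≤ ∏ j, τ (x j) := fun x => Finset.prod_nonneg fun j _ => hτ _
  refine hsum.not_ge ?_
  calc (1 : ℝ) = ∑ x : Fin m → ι, ∏ j, τ (x j) := by rw [← Fintype.sum_pow, hτ1, one_pow]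
    _ ≤ ∑ x : Fin m → ι, ∑ h ∈ T,
          if ∑ j, Y h (x j) < m * Q h / 4 then ∏ j, τ (x j) else 0 := by
        refine Finset.sum_le_sum fun x _ => ?_
        obtain ⟨h, hT, hx⟩ := hbad x
        refine (if_pos hx).ge.trans (Finset.single_le_sum
          (f := fun h => if ∑ j, Y h (x j) < m * Q h / 4 then ∏ j, τ (x j) else 0)
          (fun h _ => ?_) hT)
        split_ifs
        exacts [hprod x, le_rfl]
    _ = ∑ h ∈ T, ∑ x : Fin m → ι with ∑ j, Y h (x j) < m * Q h / 4, ∏ j, τ (x j) := by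
        simp only [Finset.sum_filter]
        exact Finset.sum_comm
    _ ≤ ∑ h ∈ T, Real.exp (-(m * Q h / (4 * V h))) := Finset.sum_le_sum fun h hT =>
        sum_prod_filter_sum_lt_le hτ hτ1 (hY h hT) (hYV h hT) (hV h hT) (hQ h hT) m

theorem exists_density_dominating {μ ν : ι → ℝ} (hμ : ∀ i, 0 < μ i) (hμ1 : ∑ i, μ i = 1)
    (hν : ∀ i, 0 ≤ ν i) (hν2 : ∑ i, ν i ≤ 2) :
    ∃ τ : ι → ℝ, (∀ i, 0 < τ i) ∧ ∑ i, τ i = 1 ∧ (∀ i, μ i ≤ 3 * τ i) ∧ ∀ i, ν i ≤ 3 * τ i := by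
  have hsum0 : 0 ≤ ∑ i, ν i := Finset.sum_nonneg fun i _ => hν i
  have hmass : ∀ i, μ i + ν i ≤ 3 * ((μ i + ν i) / (1 + ∑ i, ν i)) := fun i => by
    rw [← mul_div_assoc, le_div_iff₀ (by linarith), mul_comm]
    exact mul_le_mul_of_nonneg_right (by linarith) (add_nonneg (hμ i).le (hν i))
  refine ⟨fun i => (μ i + ν i) / (1 + ∑ i, ν i),
    fun i => div_pos (add_pos_of_pos_of_nonneg (hμ i) (hν i)) (by linarith), ?_,
    fun i => (le_add_of_nonneg_right (hν i)).trans (hmass i),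
    fun i => (le_add_of_nonneg_left (hμ i).le).trans (hmass i)⟩
  rw [← Finset.sum_div, Finset.sum_add_distrib, hμ1, div_self (by linarith)]

theorem sum_sigma_exp_neg_two_mul_lt_one {H : Type*} {L : ℕ} {T : ℕ → Finset H} {b : ℕ → ℝ}
    (hcard : ∀ j ≤ L, (T j).card ≤ Real.exp (b j)) (hb : ∀ j, L + 1 < Real.exp (b j)) :
    ∑ s ∈ (Finset.range (L + 1)).sigma T, Real.exp (-(2 * b s.1)) < 1 := by
  have hlevel : ∀ j ∈ Finset.range (L + 1),
      ∑ _w ∈ T j, Real.exp (-(2 * b j)) < 1 / (L + 1) := fun j hj => by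
    rw [Finset.sum_const, nsmul_eq_mul]
    calc (T j).card * Real.exp (-(2 * b j)) ≤ Real.exp (b j) * Real.exp (-(2 * b j)) := by
          gcongr
          exact hcard j (Finset.mem_range_succ_iff.1 hj)
      _ = 1 / Real.exp (b j) := by
          rw [← Real.exp_add, one_div, ← Real.exp_neg]
          ring_nf
      _ < 1 / (L + 1) := one_div_lt_one_div_of_lt (by positivity) (hb j)
  calc ∑ s ∈ (Finset.range (L + 1)).sigma T, Real.exp (-(2 * b s.1))
      = ∑ j ∈ Finset.range (L + 1), ∑ _w ∈ T j, Real.exp (-(2 * b j)) := Finset.sum_sigma _ _ _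
    _ < ∑ _j ∈ Finset.range (L + 1), 1 / ((L : ℝ) + 1) :=
        Finset.sum_lt_sum_of_nonempty (by simp) hlevel
    _ = 1 := by
        rw [Finset.sum_const, Finset.card_range, nsmul_eq_mul]
        push_cast
        field_simp

theorem exists_sample_forall_mem_le_sum {H : Type*} (hτ : ∀ i, 0 < τ i) (hτ1 : ∑ i, τ i = 1)
    {L : ℕ} {T : ℕ → Finset H} {g : ℕ → H → ι → ℝ} {V b : ℕ → ℝ} {θ : ℝ} {m : ℕ}
    (hg : ∀ j w i, 0 ≤ g j w i) (hgV : ∀ j w i, g j w i ≤ V j * τ i) (hV : ∀ j, 0 < V j)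
    (hcard : ∀ j ≤ L, (T j).card ≤ Real.exp (b j)) (hb : ∀ j, L + 1 < Real.exp (b j))
    (hm : ∀ j, 8 * b j * V j ≤ m * θ) :
    ∃ x : Fin m → ι, ∀ j ≤ L, ∀ w ∈ T j, θ ≤ ∑ i, g j w i →
      m * (∑ i, g j w i) / 4 ≤ ∑ k, g j w (x k) / τ (x k) := by
  classical
  let heavy : Finset (Σ _ : ℕ, H) :=
    ((Finset.range (L + 1)).sigma T).filter fun s => θ ≤ ∑ i, g s.1 s.2 i
  have hexp : ∀ s ∈ heavy, Real.exp (-(m * (∑ i, g s.1 s.2 i) / (4 * V s.1))) ≤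
      Real.exp (-(2 * b s.1)) := fun s hs => by
    refine Real.exp_le_exp.2 (neg_le_neg ?_)
    rw [le_div_iff₀ (by linarith [hV s.1])]
    calc 2 * b s.1 * (4 * V s.1) = 8 * b s.1 * V s.1 := by ring
      _ ≤ m * θ := hm s.1
      _ ≤ m * ∑ i, g s.1 s.2 i :=
          mul_le_mul_of_nonneg_left (Finset.mem_filter.1 hs).2 (Nat.cast_nonneg m)
  have hsum : ∑ s ∈ heavy, Real.exp (-(m * (∑ i, g s.1 s.2 i) / (4 * V s.1))) < 1 :=
    calc ∑ s ∈ heavy, Real.exp (-(m * (∑ i, g s.1 s.2 i) / (4 * V s.1)))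
        ≤ ∑ s ∈ heavy, Real.exp (-(2 * b s.1)) := Finset.sum_le_sum hexp
      _ ≤ ∑ s ∈ (Finset.range (L + 1)).sigma T, Real.exp (-(2 * b s.1)) :=
          Finset.sum_le_sum_of_subset_of_nonneg (Finset.filter_subset _ _)
            fun _ _ _ => (Real.exp_pos _).le
      _ < 1 := sum_sigma_exp_neg_two_mul_lt_one hcard hb
  obtain ⟨x, hx⟩ := exists_sample_forall_le_sum (fun i => (hτ i).le) hτ1 (T := heavy)
    (Y := fun s i => g s.1 s.2 i / τ i) (V := fun s => V s.1) (Q := fun s => ∑ i, g s.1 s.2 i)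
    (fun s _ i => div_nonneg (hg _ _ _) (hτ i).le)
    (fun s _ i => (div_le_iff₀ (hτ i)).2 (hgV _ _ _)) (fun s _ => hV _)
    (fun s _ => (Finset.sum_congr rfl fun i _ => (mul_div_cancel₀ _ (hτ i).ne').symm).le) hsum
  exact ⟨x, fun j hj w hw hθ => hx ⟨j, w⟩ (Finset.mem_filter.2
    ⟨Finset.mem_sigma.2 ⟨Finset.mem_range_succ_iff.2 hj, hw⟩, hθ⟩)⟩

end RandomSampling

/-! ### Nets of the modular ball -/

section ModularBall

open Module NormedSpace

variable {E : Type*} [NormedAddCommGroup E] [InnerProductSpace ℝ E]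
  {Φ : ℝ → ℝ} {r R : ℝ} {q : ℕ} {ι : Type*} [Fintype ι] {μ : ι → ℝ} {u : ι → E}

/-- The unit modular ball of the functions `i ↦ ⟪v, u i⟫` for the measure `∑ μ i • δ_i`. -/
def modularBall (Φ : ℝ → ℝ) (μ : ι → ℝ) (u : ι → E) : Set E :=
  {v | ∑ i, μ i * Φ |inner ℝ v (u i)| ≤ 1}

/-- A finite `s`-net `T` of the unit modular ball, centred in the ball, for the distance
`sup_i |⟪v - w, u i / ‖u i‖⟫|`, in which the values `⟪v, u i⟫` are measured relative to `‖u i‖`. -/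
structure IsModularNet (Φ : ℝ → ℝ) (μ : ι → ℝ) (u : ι → E) (T : Finset E) (s : ℝ) : Prop where
  subset : ↑T ⊆ modularBall Φ μ u
  exists_near : ∀ v ∈ modularBall Φ μ u, ∃ w ∈ T, ∀ i, |inner ℝ (v - w) (normalize (u i))| ≤ s

theorem rpow_abs_sub_le {r : ℝ} (hr0 : 0 ≤ r) (hr2 : r ≤ 2) (x y : ℝ) :
    |x - y| ^ r ≤ 4 * (|x| ^ r + |y| ^ r) := by
  have hmax : |x - y| ≤ 2 * max |x| |y| := by
    linarith [abs_sub x y, le_max_left |x| |y|, le_max_right |x| |y|]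
  have hmax0 : 0 ≤ max |x| |y| := (abs_nonneg x).trans (le_max_left _ _)
  calc |x - y| ^ r ≤ (2 * max |x| |y|) ^ r := Real.rpow_le_rpow (abs_nonneg _) hmax hr0
    _ = 2 ^ r * max |x| |y| ^ r := Real.mul_rpow zero_le_two hmax0
    _ ≤ 4 * (|x| ^ r + |y| ^ r) := by
        refine mul_le_mul ?_ ?_ (Real.rpow_nonneg hmax0 _) (by norm_num)
        · calc (2 : ℝ) ^ r ≤ 2 ^ (2 : ℝ) := Real.rpow_le_rpow_of_exponent_le one_le_two hr2
            _ = 4 := by norm_num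
        · have hx := Real.rpow_nonneg (abs_nonneg x) r
          have hy := Real.rpow_nonneg (abs_nonneg y) r
          rcases max_choice |x| |y| with h | h <;> rw [h] <;> linarith

theorem sub_sq_le_of_abs_sub_le {r s x y : ℝ} (hr1 : 0 < r) (hr2 : r ≤ 2) (h : |x - y| ≤ s) :
    (x - y) ^ 2 ≤ s ^ (2 - r) * (4 * (|x| ^ r + |y| ^ r)) := by
  calc (x - y) ^ 2 = |x - y| ^ (2 - r) * |x - y| ^ r := by
        rw [← Real.rpow_add' (abs_nonneg _) (by norm_num), sub_add_cancel, Real.rpow_two, sq_abs]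
    _ ≤ s ^ (2 - r) * (4 * (|x| ^ r + |y| ^ r)) :=
        mul_le_mul (Real.rpow_le_rpow (abs_nonneg _) h (by linarith))
          (rpow_abs_sub_le hr1.le hr2 x y) (Real.rpow_nonneg (abs_nonneg _) _)
          (Real.rpow_nonneg ((abs_nonneg _).trans h) _)

theorem one_le_log_four_mul {n : ℝ} (hn : 1 ≤ n) : 1 ≤ Real.log (4 * n) := by
  rw [Real.le_log_iff_exp_le (by linarith)]
  linarith [Real.exp_one_lt_d9]

theorem two_mul_exp_le_exp_add (x : ℝ) {y : ℝ} (hy : 1 ≤ y) :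
    2 * Real.exp x ≤ Real.exp (x + y) := by
  rw [Real.exp_add, mul_comm]
  gcongr
  linarith [Real.add_one_le_exp y]

theorem exists_finset_norm_net [FiniteDimensional ℝ E] {n : ℝ} (hn : 1 ≤ n)
    (hE : finrank ℝ E ≤ n) {ρ s : ℝ} (hs : 0 < s) {S : Set E} (hS : ∀ v ∈ S, ‖v‖ ≤ ρ) :
    ∃ T : Finset E, ↑T ⊆ S ∧ T.card ≤ 2 * Real.exp (4 * Real.log (4 * n) * n * (ρ / s) ^ 2) ∧
      ∀ v ∈ S, ∃ w ∈ T, ‖v - w‖ ≤ s := by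
  have hn0 : 0 < n := zero_lt_one.trans_le hn
  let b := stdOrthonormalBasis ℝ E
  obtain ⟨T, hTS, hcard, hT⟩ := exists_finset_net (fun k => (b.norm_eq_one k).le) hn
    (by simpa using hE) (div_pos hs (Real.sqrt_pos.2 hn0)) (c := 0)
    fun v hv => by rw [sub_zero]; exact hS v hv
  refine ⟨T, hTS, hcard.trans_eq ?_, fun v hv => ?_⟩
  · rw [div_pow, Real.sq_sqrt hn0.le]
    field_simp
  · obtain ⟨w, hw, hvw⟩ := hT v hv
    refine ⟨w, hw, (sq_le_sq₀ (norm_nonneg _) hs.le).1 ?_⟩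
    calc ‖v - w‖ ^ 2 = ∑ k, inner ℝ (v - w) (b k) ^ 2 := by
          rw [← b.sum_sq_norm_inner_left]
          simp only [Real.norm_eq_abs, sq_abs]
      _ ≤ ∑ _k : Fin (finrank ℝ E), (s / √n) ^ 2 := by
          gcongr ∑ k, ?_ with k
          rw [← sq_abs]
          exact pow_le_pow_left₀ (abs_nonneg _) (hvw k) 2
      _ = finrank ℝ E * (s ^ 2 / n) := by
          rw [Finset.sum_const, Finset.card_fin, nsmul_eq_mul, div_pow, Real.sq_sqrt hn0.le]
      _ ≤ n * (s ^ 2 / n) := by gcongr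
      _ = s ^ 2 := mul_div_cancel₀ _ hn0.ne'

theorem zero_mem_modularBall (hΦ : PowerGrowth Φ r q) : (0 : E) ∈ modularBall Φ μ u := by
  simp [modularBall, hΦ.map_zero]

namespace LewisPosition

theorem sum_mul_rpow_abs_inner_le (hL : LewisPosition Φ r R μ u) (hΦ : PowerGrowth Φ r q)
    (hμ : ∀ i, 0 ≤ μ i) {v : E} (hv : v ∈ modularBall Φ μ u) :
    ∑ i, μ i * Φ ‖u i‖ * |inner ℝ v (normalize (u i))| ^ r ≤ 3 := by
  have hterm : ∀ i, Φ ‖u i‖ * |inner ℝ v (normalize (u i))| ^ r ≤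
      Φ ‖u i‖ + Φ |inner ℝ v (u i)| := fun i => by
    have hnorm := hΦ.nonneg (norm_nonneg (u i))
    rcases le_total |inner ℝ v (normalize (u i))| 1 with hle | hge
    · have hone := Real.rpow_le_one (abs_nonneg _) hle (zero_le_one.trans hΦ.one_le)
      exact (mul_le_of_le_one_right hnorm hone).trans
        (le_add_of_nonneg_right (hΦ.nonneg (abs_nonneg _)))
    · have hlow := hΦ.rpow_mul_le _ ‖u i‖ hge (norm_nonneg _)
      rw [inner_eq_norm_mul_inner_normalize v (u i), abs_mul, abs_norm, mul_comm ‖u i‖]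
      linarith
  calc ∑ i, μ i * Φ ‖u i‖ * |inner ℝ v (normalize (u i))| ^ r
      ≤ ∑ i, (μ i * Φ ‖u i‖ + μ i * Φ |inner ℝ v (u i)|) := Finset.sum_le_sum fun i _ => by
        rw [mul_assoc, ← mul_add]
        exact mul_le_mul_of_nonneg_left (hterm i) (hμ i)
    _ = ∑ i, μ i * Φ ‖u i‖ + ∑ i, μ i * Φ |inner ℝ v (u i)| := Finset.sum_add_distrib
    _ ≤ 2 + 1 := add_le_add hL.sum_le_two hv
    _ = 3 := by norm_num

theorem norm_sub_sq_le (hL : LewisPosition Φ r R μ u) (hΦ : PowerGrowth Φ r q) (hr2 : r ≤ 2)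
    (hμ : ∀ i, 0 ≤ μ i) (hR : 0 ≤ R) {v w : E} (hv : v ∈ modularBall Φ μ u)
    (hw : w ∈ modularBall Φ μ u) {s : ℝ} (hs : 0 < s)
    (hvw : ∀ i, |inner ℝ (v - w) (normalize (u i))| ≤ s) :
    ‖v - w‖ ^ 2 ≤ (R / s) ^ r * s ^ 2 := by
  let ν : ι → ℝ := fun i => μ i * Φ ‖u i‖
  have hsum : ∑ i, ν i * inner ℝ (v - w) (normalize (u i)) ^ 2 ≤ 32 * s ^ (2 - r) :=
    calc ∑ i, ν i * inner ℝ (v - w) (normalize (u i)) ^ 2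
        ≤ ∑ i, 4 * s ^ (2 - r) * (ν i * |inner ℝ v (normalize (u i))| ^ r +
            ν i * |inner ℝ w (normalize (u i))| ^ r) := by
          refine Finset.sum_le_sum fun i _ => ?_
          have hi := hvw i
          rw [inner_sub_left] at hi ⊢
          refine (mul_le_mul_of_nonneg_left (sub_sq_le_of_abs_sub_le
            (zero_lt_one.trans_le hΦ.one_le) hr2 hi)
            (mul_nonneg (hμ i) (hΦ.nonneg (norm_nonneg _)))).trans_eq (by ring)
      _ = 4 * s ^ (2 - r) * (∑ i, ν i * |inner ℝ v (normalize (u i))| ^ r +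
            ∑ i, ν i * |inner ℝ w (normalize (u i))| ^ r) := by
          rw [← Finset.mul_sum, Finset.sum_add_distrib]
      _ ≤ 4 * s ^ (2 - r) * (3 + 3) := by
          gcongr
          exacts [hL.sum_mul_rpow_abs_inner_le hΦ hμ hv, hL.sum_mul_rpow_abs_inner_le hΦ hμ hw]
      _ ≤ 32 * s ^ (2 - r) := by linarith [Real.rpow_pos_of_pos hs (2 - r)]
  calc ‖v - w‖ ^ 2 ≤ R ^ r / 32 * (32 * s ^ (2 - r)) :=
        (hL.norm_sq_le _).trans (mul_le_mul_of_nonneg_left hsum (by positivity))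
    _ = (R / s) ^ r * s ^ 2 := by
        rw [Real.rpow_sub hs, Real.rpow_two, Real.div_rpow hR hs.le]
        ring

theorem norm_le (hL : LewisPosition Φ r R μ u) (hΦ : PowerGrowth Φ r q) (hr2 : r ≤ 2)
    (hμ : ∀ i, 0 ≤ μ i) (hR : 0 ≤ R) {v : E} (hv : v ∈ modularBall Φ μ u) : ‖v‖ ≤ R := by
  rcases (norm_nonneg v).eq_or_lt with hv0 | hv0
  · rwa [← hv0]
  have hsq := hL.norm_sub_sq_le hΦ hr2 hμ hR hv (zero_mem_modularBall hΦ) hv0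
    fun i => by rw [sub_zero]; exact abs_inner_normalize_le v (u i)
  rw [sub_zero] at hsq
  by_contra! hlt
  have hone : (R / ‖v‖) ^ r < 1 :=
    Real.rpow_lt_one (by positivity) ((div_lt_one hv0).2 hlt) (zero_lt_one.trans_le hΦ.one_le)
  exact hsq.not_gt (mul_lt_of_lt_one_left (by positivity) hone)

theorem exists_isModularNet_half [FiniteDimensional ℝ E] (hL : LewisPosition Φ r R μ u)
    (hΦ : PowerGrowth Φ r q) (hr2 : r ≤ 2) (hμ : ∀ i, 0 ≤ μ i) {s : ℝ} (hs : 0 < s) (hsR : s ≤ R)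
    {n : ℝ} (hn : 1 ≤ n) (hcard : Fintype.card ι ≤ n) {T : Finset E}
    (hT : IsModularNet Φ μ u T s) :
    ∃ T', IsModularNet Φ μ u T' (s / 2) ∧
      T'.card ≤ T.card * Real.exp (17 * Real.log (4 * n) * (R / s) ^ r) := by
  classical
  have hR : 0 < R := hs.trans_le hsR
  have hlocal : ∀ w ∈ T, ∃ G : Finset E, ↑G ⊆ modularBall Φ μ u ∧
      G.card ≤ Real.exp (17 * Real.log (4 * n) * (R / s) ^ r) ∧
      ∀ v ∈ modularBall Φ μ u, (∀ i, |inner ℝ (v - w) (normalize (u i))| ≤ s) →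
        ∃ z ∈ G, ∀ i, |inner ℝ (v - z) (normalize (u i))| ≤ s / 2 := fun w hw => by
    have hmass : 0 ≤ (R / s) ^ r * s ^ 2 := by positivity
    obtain ⟨G, hGS, hGcard, hG⟩ := exists_finset_net (fun i => norm_normalize_le_one (u i)) hn hcard
      (c := w) (ρ := √((R / s) ^ r * s ^ 2)) (half_pos hs)
      (S := {v | v ∈ modularBall Φ μ u ∧ ∀ i, |inner ℝ (v - w) (normalize (u i))| ≤ s})
      fun v hv => Real.le_sqrt_of_sq_le
        (hL.norm_sub_sq_le hΦ hr2 hμ hR.le hv.1 (hT.subset hw) hs hv.2)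
    refine ⟨G, fun v hv => (hGS hv).1, hGcard.trans ?_, fun v hv hvw => hG v ⟨hv, hvw⟩⟩
    have hexponent : 4 * Real.log (4 * n) * √((R / s) ^ r * s ^ 2) ^ 2 / (s / 2) ^ 2 =
        16 * Real.log (4 * n) * (R / s) ^ r := by
      rw [Real.sq_sqrt hmass]; field_simp; ring
    rw [hexponent]
    have hone : 1 ≤ Real.log (4 * n) * (R / s) ^ r := one_le_mul_of_one_le_of_one_le
      (one_le_log_four_mul hn) (Real.one_le_rpow ((one_le_div hs).2 hsR) (by linarith [hΦ.one_le]))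
    exact (two_mul_exp_le_exp_add _ hone).trans_eq (by ring_nf)
  choose! G hGS hGcard hG using hlocal
  refine ⟨T.biUnion G, ⟨fun v hv => ?_, fun v hv => ?_⟩, ?_⟩
  · obtain ⟨w, hw, hvw⟩ := Finset.mem_biUnion.1 hv
    exact hGS w hw hvw
  · obtain ⟨w, hw, hvw⟩ := hT.exists_near v hv
    obtain ⟨z, hz, hvz⟩ := hG w hw v hv hvw
    exact ⟨z, Finset.mem_biUnion.2 ⟨w, hw, hz⟩, hvz⟩
  · calc ((T.biUnion G).card : ℝ) ≤ ∑ w ∈ T, ((G w).card : ℝ) := by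
          exact_mod_cast Finset.card_biUnion_le
      _ ≤ T.card * Real.exp (17 * Real.log (4 * n) * (R / s) ^ r) := by
          rw [← nsmul_eq_mul]
          exact Finset.sum_le_card_nsmul _ _ _ hGcard

theorem exists_isModularNet [FiniteDimensional ℝ E] (hL : LewisPosition Φ r R μ u)
    (hΦ : PowerGrowth Φ r q) (hr2 : r ≤ 2) (hμ : ∀ i, 0 ≤ μ i) (hR : 0 < R)
    {n : ℝ} (hn : 1 ≤ n) (hcard : Fintype.card ι ≤ n) (j : ℕ) :
    ∃ T, IsModularNet Φ μ u T (R / 2 ^ j) ∧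
      T.card ≤ Real.exp (17 * Real.log (4 * n) * (2 ^ j) ^ r) := by
  have hlog : 0 ≤ Real.log (4 * n) := Real.log_nonneg (by linarith)
  induction j with
  | zero =>
    refine ⟨{0}, ⟨by simpa using zero_mem_modularBall hΦ,
      fun v hv => ⟨0, by simp, fun i => ?_⟩⟩, ?_⟩
    · rw [sub_zero, pow_zero, div_one]
      exact (abs_inner_normalize_le v (u i)).trans (hL.norm_le hΦ hr2 hμ hR.le hv)
    · rw [Finset.card_singleton, Nat.cast_one]
      exact Real.one_le_exp (by positivity)
  | succ j ih =>
    obtain ⟨T, hT, hTcard⟩ := ih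
    obtain ⟨T', hT', hT'card⟩ := hL.exists_isModularNet_half hΦ hr2 hμ (by positivity)
      (div_le_self hR.le (one_le_pow₀ one_le_two)) hn hcard hT
    rw [div_div_cancel₀ hR.ne'] at hT'card
    refine ⟨T', by rwa [pow_succ, ← div_div], hT'card.trans ?_⟩
    have hdouble : 2 * ((2 : ℝ) ^ j) ^ r ≤ (2 ^ (j + 1)) ^ r := by
      rw [pow_succ', Real.mul_rpow zero_le_two (by positivity)]
      gcongr
      exact Real.self_le_rpow_of_one_le one_le_two hΦ.one_le
    calc T.card * Real.exp (17 * Real.log (4 * n) * (2 ^ j) ^ r)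
        ≤ Real.exp (17 * Real.log (4 * n) * (2 ^ j) ^ r) *
            Real.exp (17 * Real.log (4 * n) * (2 ^ j) ^ r) := by gcongr
      _ = Real.exp (17 * Real.log (4 * n) * (2 * (2 ^ j) ^ r)) := by rw [← Real.exp_add]; ring_nf
      _ ≤ Real.exp (17 * Real.log (4 * n) * (2 ^ (j + 1)) ^ r) := by gcongr

theorem exists_isModularNet_of_two_pow_le [FiniteDimensional ℝ E] (hL : LewisPosition Φ r R μ u)
    (hΦ : PowerGrowth Φ r q) (hr2 : r ≤ 2) (hμ : ∀ i, 0 ≤ μ i) (hR : 1 ≤ R) {n : ℝ} (hn : 1 ≤ n)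
    (hE : finrank ℝ E ≤ n) {j : ℕ} (hj : 2 ^ j ≤ 32 * R) :
    ∃ T, IsModularNet Φ μ u T (R / 2 ^ j) ∧
      T.card ≤ Real.exp (129 * Real.log (4 * n) * n * R * (2 ^ j) ^ r) := by
  have hR0 : 0 < R := zero_lt_one.trans_le hR
  obtain ⟨T, hTS, hcard, hT⟩ := exists_finset_norm_net hn hE (s := R / 2 ^ j) (by positivity)
    fun v hv => hL.norm_le hΦ hr2 hμ hR0.le hv
  refine ⟨T, ⟨hTS, fun v hv => ?_⟩, hcard.trans ?_⟩
  · obtain ⟨w, hw, hvw⟩ := hT v hv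
    exact ⟨w, hw, fun i => (abs_inner_normalize_le _ _).trans hvw⟩
  have hpow : (1 : ℝ) ≤ 2 ^ j := one_le_pow₀ one_le_two
  have hsq : ((2 : ℝ) ^ j) ^ 2 ≤ (2 ^ j) ^ r * (32 * R) :=
    calc ((2 : ℝ) ^ j) ^ 2 = 2 ^ j * 2 ^ j := sq _
      _ ≤ (2 ^ j) ^ r * (32 * R) := by
          gcongr
          exact Real.self_le_rpow_of_one_le hpow hΦ.one_le
  have hlog := one_le_log_four_mul hn
  have hone : 1 ≤ Real.log (4 * n) * n * R * (2 ^ j) ^ r :=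
    one_le_mul_of_one_le_of_one_le (one_le_mul_of_one_le_of_one_le
      (one_le_mul_of_one_le_of_one_le hlog hn) hR)
      (Real.one_le_rpow hpow (zero_le_one.trans hΦ.one_le))
  rw [div_div_cancel₀ hR0.ne']
  calc 2 * Real.exp (4 * Real.log (4 * n) * n * (2 ^ j) ^ 2)
      ≤ 2 * Real.exp (4 * Real.log (4 * n) * n * ((2 ^ j) ^ r * (32 * R))) := by gcongr
    _ ≤ Real.exp (4 * Real.log (4 * n) * n * ((2 ^ j) ^ r * (32 * R)) +
          Real.log (4 * n) * n * R * (2 ^ j) ^ r) := two_mul_exp_le_exp_add _ hone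
    _ = Real.exp (129 * Real.log (4 * n) * n * R * (2 ^ j) ^ r) := by ring_nf

end LewisPosition

end ModularBall

/-! ### Random sampling by levels -/

section Levels

open NormedSpace

variable {Φ Ψ : ℝ → ℝ} {r a : ℝ} {q : ℕ}

/-- The value `Φ (w * s)` as soon as the relative size `g` reaches the level `s`, and `0` otherwise:
a layer of the dyadic decomposition of `Φ (w * g)`. -/
noncomputable def levelValue (Φ : ℝ → ℝ) (w s g : ℝ) : ℝ :=
  if s ≤ g then Φ (w * s) else 0

theorem levelValue_nonneg (hΦ : PowerGrowth Φ r q) {w s : ℝ} (hw : 0 ≤ w) (hs : 0 ≤ s) (g : ℝ) :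
    0 ≤ levelValue Φ w s g := by
  rw [levelValue]
  split_ifs
  exacts [hΦ.nonneg (mul_nonneg hw hs), le_rfl]

theorem levelValue_le_map_mul (hΦ : PowerGrowth Φ r q) {w s : ℝ} (hw : 0 ≤ w) (hs : 0 ≤ s)
    (g : ℝ) : levelValue Φ w s g ≤ Φ (w * s) := by
  rw [levelValue]
  split_ifs
  exacts [le_rfl, hΦ.nonneg (mul_nonneg hw hs)]

theorem levelValue_le_levelValue (hΦ : PowerGrowth Φ r q) {w s g g' : ℝ} (hw : 0 ≤ w) (hs : 0 ≤ s)
    (hg : s ≤ g → s ≤ g') : levelValue Φ w s g ≤ levelValue Φ w s g' := by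
  by_cases h : s ≤ g
  · simp only [levelValue, if_pos h, if_pos (hg h), le_refl]
  · rw [levelValue, if_neg h]
    exact levelValue_nonneg hΦ hw hs g'

theorem levelValue_le_div_mul (hΦ : PowerGrowth Φ r q) {w s g : ℝ} (hw : 0 ≤ w) (hs : 0 ≤ s) :
    levelValue Φ w s g ≤ (if s ≤ g then s else 0) / g * Φ (w * g) := by
  rw [levelValue]
  split_ifs with h
  · exact hΦ.map_mul_le_div_mul hw hs h
  · simp

theorem sum_ite_div_two_pow_le (L : ℕ) {c B : ℝ} (hc : 0 ≤ c) (hB : 0 ≤ B) :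
    ∑ j ∈ Finset.range L, (if c / 2 ^ j ≤ B then c / 2 ^ j else 0) ≤ 2 * min c B := by
  induction L generalizing c with
  | zero => simpa using le_min hc hB
  | succ L ih =>
    have hsplit := ih (div_nonneg hc zero_le_two)
    simp only [div_div, ← pow_succ'] at hsplit
    rw [Finset.sum_range_succ', pow_zero, div_one]
    rcases le_total c B with h | h
    · rw [if_pos h, min_eq_left h]
      linarith [min_le_left (c / 2) B]
    · rw [min_eq_right h]
      split_ifs with h'
      · linarith [min_le_left (c / 2) B]
      · linarith [min_le_right (c / 2) B]

theorem sum_levelValue_le (hΦ : PowerGrowth Φ r q) {w c g : ℝ} (hw : 0 ≤ w) (hc : 0 ≤ c)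
    (hg : 0 ≤ g) (L : ℕ) :
    ∑ j ∈ Finset.range L, levelValue Φ w (c / 2 ^ j) g ≤ 2 * Φ (w * g) :=
  calc ∑ j ∈ Finset.range L, levelValue Φ w (c / 2 ^ j) g
      ≤ (∑ j ∈ Finset.range L, if c / 2 ^ j ≤ g then c / 2 ^ j else 0) / g * Φ (w * g) := by
        rw [Finset.sum_div, Finset.sum_mul]
        exact Finset.sum_le_sum fun j _ => levelValue_le_div_mul hΦ hw (by positivity)
    _ ≤ 2 * Φ (w * g) := by
        refine mul_le_mul_of_nonneg_right ?_ (hΦ.nonneg (mul_nonneg hw hg))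
        refine div_le_of_le_mul₀ hg zero_le_two ((sum_ite_div_two_pow_le L hc hg).trans ?_)
        linarith [min_le_right c g]

theorem map_mul_le_sum_levelValue (hΦ : PowerGrowth Φ r q) {w c g : ℝ} (hw : 0 ≤ w) (hc : 0 ≤ c)
    (hgc : g < c) (L : ℕ) (hg : c / 2 ^ L ≤ g) :
    Φ (w * g) ≤ 2 ^ q * ∑ j ∈ Finset.range (L + 1), levelValue Φ w (c / 2 ^ j) g := by
  have hnonneg : ∀ j, 0 ≤ levelValue Φ w (c / 2 ^ j) g := fun j =>
    levelValue_nonneg hΦ hw (by positivity) g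
  induction L with
  | zero => exact absurd hgc (by simpa using hg)
  | succ L ih =>
    rw [Finset.sum_range_succ, mul_add]
    rcases le_or_gt (c / 2 ^ L) g with h | h
    · exact (ih h).trans (le_add_of_nonneg_right (mul_nonneg (by positivity) (hnonneg _)))
    · refine le_add_of_nonneg_of_le
        (mul_nonneg (by positivity) (Finset.sum_nonneg fun j _ => hnonneg j)) ?_
      have hs : 0 ≤ c / 2 ^ (L + 1) := by positivity
      rw [levelValue, if_pos hg]
      calc Φ (w * g) ≤ Φ (2 * (w * (c / 2 ^ (L + 1)))) := by
            refine hΦ.mono (mul_nonneg hw (hs.trans hg)) ?_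
            rw [mul_left_comm, pow_succ, ← div_div, mul_div_cancel₀ _ two_ne_zero]
            gcongr
        _ ≤ 2 ^ q * Φ (w * (c / 2 ^ (L + 1))) := hΦ.le_pow_mul _ _ one_le_two (mul_nonneg hw hs)

theorem map_mul_le_add_sum_levelValue (hΦ : PowerGrowth Φ r q) {w c g : ℝ} (hw : 0 ≤ w)
    (hc : 0 ≤ c) (hg : 0 ≤ g) (hgc : g < c) {L : ℕ} (hL : c / 2 ^ L ≤ 1 / 4) :
    Φ (w * g) ≤
      1 / 4 * Φ w + 2 ^ q * ∑ j ∈ Finset.range (L + 1), levelValue Φ w (c / 2 ^ j) g := by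
  rcases le_or_gt (c / 2 ^ L) g with h | h
  · exact (map_mul_le_sum_levelValue hΦ hw hc hgc L h).trans
      (le_add_of_nonneg_left (mul_nonneg (by norm_num) (hΦ.nonneg hw)))
  · have hsmall := hΦ.map_mul_le_div_mul hw hg
      (h.le.trans (hL.trans (by norm_num : (1 / 4 : ℝ) ≤ 1)))
    rw [div_one, mul_one] at hsmall
    refine le_add_of_le_of_nonneg (hsmall.trans ?_) ?_
    · exact mul_le_mul_of_nonneg_right (h.le.trans hL) (hΦ.nonneg hw)
    · exact mul_nonneg (by positivity)
        (Finset.sum_nonneg fun j _ => levelValue_nonneg hΦ hw (by positivity) g)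

/-- `Ψ` dominates the dilation quotients `Φ (w * s) / Φ w`, and lies in `(aInc)_r ∩ (Dec)_q` with
constant `a`. -/
structure DilationMajorant (Φ Ψ : ℝ → ℝ) (r : ℝ) (q : ℕ) (a : ℝ) : Prop where
  pos : ∀ t, 0 < t → 0 < Ψ t
  rpow_mul_le : ∀ y t, 1 ≤ y → 0 < t → y ^ r * Ψ t ≤ a * Ψ (y * t)
  le_pow_mul : ∀ y t, 1 ≤ y → 0 < t → Ψ (y * t) ≤ y ^ q * Ψ t
  map_mul_le : ∀ w s, 0 ≤ w → 0 < s → Φ (w * s) ≤ Ψ s * Φ w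

theorem DilationMajorant.one_le (hΨ : DilationMajorant Φ Ψ r q a) : 1 ≤ a := by
  have h := hΨ.rpow_mul_le 1 1 le_rfl one_pos
  rw [Real.one_rpow, one_mul, one_mul] at h
  exact (le_mul_iff_one_le_left (hΨ.pos 1 one_pos)).1 h

theorem DilationMajorant.map_level_mul_le (hΨ : DilationMajorant Φ Ψ r q a) {R : ℝ} (hR : 0 < R)
    (j : ℕ) : Ψ (4 * R / 2 ^ j) * (2 ^ j) ^ r ≤ 4 ^ q * a * Ψ R := by
  have hgrow := hΨ.rpow_mul_le (2 ^ j) (4 * R / 2 ^ j) (one_le_pow₀ one_le_two) (by positivity)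
  rw [mul_div_cancel₀ _ (by positivity : (2 : ℝ) ^ j ≠ 0)] at hgrow
  have hdouble := mul_le_mul_of_nonneg_left (hΨ.le_pow_mul 4 R (by norm_num) hR)
    (zero_le_one.trans hΨ.one_le)
  linarith

variable {E : Type*} [NormedAddCommGroup E] [InnerProductSpace ℝ E] {ι : Type*}
  {μ : ι → ℝ} {u : ι → E}

/-- The layer of height `4 * s` of the density `μ i * Φ |⟪w, u i⟫|`. The relative value of `w` is
increased by `s`, so that the layer dominates those of all `v` that are `s`-close to `w`. -/
noncomputable def levelDensity (Φ : ℝ → ℝ) (μ : ι → ℝ) (u : ι → E) (s : ℝ) (w : E) (i : ι) : ℝ :=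
  μ i * levelValue Φ ‖u i‖ (4 * s) (|inner ℝ w (normalize (u i))| + s)

theorem levelDensity_nonneg (hΦ : PowerGrowth Φ r q) (hμ : ∀ i, 0 ≤ μ i) {s : ℝ} (hs : 0 ≤ s)
    (w : E) (i : ι) : 0 ≤ levelDensity Φ μ u s w i :=
  mul_nonneg (hμ i) (levelValue_nonneg hΦ (norm_nonneg _) (by positivity) _)

theorem levelDensity_le (hΦ : PowerGrowth Φ r q) (hΨ : DilationMajorant Φ Ψ r q a)
    (hμ : ∀ i, 0 ≤ μ i) {s : ℝ} (hs : 0 < s) (w : E) (i : ι) :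
    levelDensity Φ μ u s w i ≤ Ψ (4 * s) * (μ i * Φ ‖u i‖) := by
  rw [mul_left_comm]
  exact mul_le_mul_of_nonneg_left
    ((levelValue_le_map_mul hΦ (norm_nonneg _) (by positivity) _).trans
      (hΨ.map_mul_le _ _ (norm_nonneg _) (by positivity))) (hμ i)

theorem abs_inner_eq_norm_mul_abs_inner_normalize (v x : E) :
    |inner ℝ v x| = ‖x‖ * |inner ℝ v (normalize x)| := by
  rw [inner_eq_norm_mul_inner_normalize, abs_mul, abs_norm]

theorem sum_levelDensity_le (hΦ : PowerGrowth Φ r q) {R : ℝ} (hR : 0 ≤ R) {L : ℕ} {v : E}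
    {W : ℕ → E} {i : ι} (hμ : 0 ≤ μ i)
    (hW : ∀ j < L, |inner ℝ (v - W j) (normalize (u i))| ≤ R / 2 ^ j) :
    ∑ j ∈ Finset.range L, levelDensity Φ μ u (R / 2 ^ j) (W j) i ≤
      2 ^ (q + 1) * (μ i * Φ |inner ℝ v (u i)|) := by
  set g := |inner ℝ v (normalize (u i))|
  have : 0 ≤ g := abs_nonneg _
  have hlayer : ∀ j ∈ Finset.range L, levelDensity Φ μ u (R / 2 ^ j) (W j) i ≤
      μ i * levelValue Φ ‖u i‖ (4 * R / 2 ^ j) (2 * g) := fun j hj => by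
    have hnear := hW j (Finset.mem_range.1 hj)
    rw [inner_sub_left, abs_sub_comm] at hnear
    rw [levelDensity, mul_div_assoc]
    refine mul_le_mul_of_nonneg_left
      (levelValue_le_levelValue hΦ (norm_nonneg _) (by positivity) fun h => ?_) hμ
    linarith [abs_sub_abs_le_abs_sub (inner ℝ (W j) (normalize (u i)))
      (inner ℝ v (normalize (u i)))]
  calc ∑ j ∈ Finset.range L, levelDensity Φ μ u (R / 2 ^ j) (W j) i
      ≤ μ i * ∑ j ∈ Finset.range L, levelValue Φ ‖u i‖ (4 * R / 2 ^ j) (2 * g) := by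
        rw [Finset.mul_sum]
        exact Finset.sum_le_sum hlayer
    _ ≤ μ i * (2 * Φ (2 * (‖u i‖ * g))) := by
        rw [mul_left_comm 2]
        exact mul_le_mul_of_nonneg_left
          (sum_levelValue_le hΦ (norm_nonneg _) (by positivity) (by positivity) L) hμ
    _ ≤ μ i * (2 * (2 ^ q * Φ (‖u i‖ * g))) := by
        gcongr
        exact hΦ.le_pow_mul _ _ one_le_two (by positivity)
    _ = 2 ^ (q + 1) * (μ i * Φ |inner ℝ v (u i)|) := by
        rw [abs_inner_eq_norm_mul_abs_inner_normalize v (u i)]; ring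

theorem map_abs_inner_le_sum_levelDensity (hΦ : PowerGrowth Φ r q) {R : ℝ} (hR : 0 < R) {L : ℕ}
    (hRL : 16 * R ≤ 2 ^ L) {v : E} (hv : ‖v‖ ≤ R) {W : ℕ → E} {i : ι} (hμ : 0 ≤ μ i)
    (hW : ∀ j ≤ L, |inner ℝ (v - W j) (normalize (u i))| ≤ R / 2 ^ j) :
    μ i * Φ |inner ℝ v (u i)| ≤ 1 / 4 * (μ i * Φ ‖u i‖) +
      2 ^ q * ∑ j ∈ Finset.range (L + 1), levelDensity Φ μ u (R / 2 ^ j) (W j) i := by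
  set g := |inner ℝ v (normalize (u i))|
  have hgR : g < 4 * R := by linarith [abs_inner_normalize_le v (u i)]
  have hL : 4 * R / 2 ^ L ≤ 1 / 4 := by
    rw [div_le_iff₀ (by positivity)]
    linarith
  calc μ i * Φ |inner ℝ v (u i)|
      ≤ μ i * (1 / 4 * Φ ‖u i‖ +
          2 ^ q * ∑ j ∈ Finset.range (L + 1), levelValue Φ ‖u i‖ (4 * R / 2 ^ j) g) := by
        rw [abs_inner_eq_norm_mul_abs_inner_normalize v (u i)]
        exact mul_le_mul_of_nonneg_left (map_mul_le_add_sum_levelValue hΦ (norm_nonneg _)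
          (by positivity) (abs_nonneg _) hgR hL) hμ
    _ = 1 / 4 * (μ i * Φ ‖u i‖) +
          2 ^ q * ∑ j ∈ Finset.range (L + 1), μ i * levelValue Φ ‖u i‖ (4 * R / 2 ^ j) g := by
        rw [← Finset.mul_sum]
        ring
    _ ≤ _ := by
        gcongr with j hj
        have hnear := hW j (Nat.lt_succ_iff.1 (Finset.mem_range.1 hj))
        rw [inner_sub_left] at hnear
        rw [levelDensity, mul_div_assoc]
        refine mul_le_mul_of_nonneg_left
          (levelValue_le_levelValue hΦ (norm_nonneg _) (by positivity) fun h => ?_) hμ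
        linarith [abs_sub_abs_le_abs_sub (inner ℝ v (normalize (u i)))
          (inner ℝ (W j) (normalize (u i)))]

variable [Fintype ι] {R : ℝ}

theorem LewisPosition.one_le_sum_sum_levelDensity (hL : LewisPosition Φ r R μ u)
    (hΦ : PowerGrowth Φ r q) (hμ : ∀ i, 0 ≤ μ i) (hR : 0 < R) {L : ℕ} (hRL : 16 * R ≤ 2 ^ L)
    {v : E} (hvR : ‖v‖ ≤ R) (hv : ∑ i, μ i * Φ |inner ℝ v (u i)| = 1) {W : ℕ → E}
    (hW : ∀ j ≤ L, ∀ i, |inner ℝ (v - W j) (normalize (u i))| ≤ R / 2 ^ j) :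
    1 ≤ 2 ^ (q + 1) * ∑ j ∈ Finset.range (L + 1), ∑ i, levelDensity Φ μ u (R / 2 ^ j) (W j) i := by
  have hsum := Finset.sum_le_sum fun i (_ : i ∈ Finset.univ) =>
    map_abs_inner_le_sum_levelDensity (u := u) hΦ hR hRL hvR (hμ i) fun j hj => hW j hj i
  rw [hv, Finset.sum_add_distrib, ← Finset.mul_sum, ← Finset.mul_sum, Finset.sum_comm] at hsum
  rw [pow_succ]
  linarith [hL.sum_le_two]

theorem mul_sum_sub_card_mul_le_sum {κ : Type*} {s : Finset κ} {c θ : ℝ} {S D : κ → ℝ} (hc : 0 ≤ c)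
    (hθ : 0 ≤ θ) (hD : ∀ j ∈ s, 0 ≤ D j) (h : ∀ j ∈ s, θ ≤ S j → c * S j ≤ D j) :
    c * (∑ j ∈ s, S j - s.card * θ) ≤ ∑ j ∈ s, D j := by
  have hterm : ∀ j ∈ s, c * S j ≤ D j + c * θ := fun j hj => by
    rcases le_total θ (S j) with hS | hS
    · exact (h j hj hS).trans (le_add_of_nonneg_right (mul_nonneg hc hθ))
    · exact le_add_of_nonneg_of_le (hD j hj) (mul_le_mul_of_nonneg_left hS hc)
  have hsum := Finset.sum_le_sum hterm
  rw [← Finset.mul_sum, Finset.sum_add_distrib, Finset.sum_const, nsmul_eq_mul] at hsum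
  linarith

theorem LewisPosition.card_le_mul_sum_of_levels {m L : ℕ} {τ : ι → ℝ} {x : Fin m → ι}
    (hL : LewisPosition Φ r R μ u) (hΦ : PowerGrowth Φ r q) (hμ : ∀ i, 0 ≤ μ i) (hR : 0 < R)
    (hτ : ∀ i, 0 < τ i) (hμτ : ∀ i, μ i ≤ 3 * τ i) (hRL : 16 * R ≤ 2 ^ L)
    {v : E} (hvR : ‖v‖ ≤ R) (hv : ∑ i, μ i * Φ |inner ℝ v (u i)| = 1) {W : ℕ → E}
    (hW : ∀ j ≤ L, ∀ i, |inner ℝ (v - W j) (normalize (u i))| ≤ R / 2 ^ j)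
    (hx : ∀ j ≤ L, 1 / (2 ^ (q + 2) * (L + 1)) ≤ ∑ i, levelDensity Φ μ u (R / 2 ^ j) (W j) i →
      m * (∑ i, levelDensity Φ μ u (R / 2 ^ j) (W j) i) / 4 ≤
        ∑ k, levelDensity Φ μ u (R / 2 ^ j) (W j) (x k) / τ (x k)) :
    m ≤ 96 * 4 ^ q * ∑ k, Φ |inner ℝ v (u (x k))| := by
  have htotal := hL.one_le_sum_sum_levelDensity hΦ hμ hR hRL hvR hv hW
  have hpoint : ∀ k, ∑ j ∈ Finset.range (L + 1),
      levelDensity Φ μ u (R / 2 ^ j) (W j) (x k) / τ (x k) ≤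
        3 * 2 ^ (q + 1) * Φ |inner ℝ v (u (x k))| := fun k => by
    rw [← Finset.sum_div, div_le_iff₀ (hτ _)]
    refine (sum_levelDensity_le hΦ hR.le (hμ _) fun j hj => hW j (Nat.lt_succ_iff.1 hj) _).trans ?_
    have hΦpos := hΦ.nonneg (abs_nonneg (inner ℝ v (u (x k))))
    calc 2 ^ (q + 1) * (μ (x k) * Φ |inner ℝ v (u (x k))|)
        ≤ 2 ^ (q + 1) * (3 * τ (x k) * Φ |inner ℝ v (u (x k))|) := by gcongr; exact hμτ _
      _ = _ := by ring
  have hlevels := (mul_sum_sub_card_mul_le_sum (s := Finset.range (L + 1)) (c := (m : ℝ) / 4)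
    (by positivity) (by positivity) (fun j _ => Finset.sum_nonneg fun k _ =>
      div_nonneg (levelDensity_nonneg hΦ hμ (by positivity) _ _) (hτ _).le)
    (fun j hj hθ => (mul_div_right_comm _ _ _).ge.trans
      (hx j (Nat.lt_succ_iff.1 (Finset.mem_range.1 hj)) hθ))).trans_eq
    Finset.sum_comm
  rw [Finset.card_range, Nat.cast_add_one,
    show ((L : ℝ) + 1) * (1 / (2 ^ (q + 2) * (L + 1))) = 1 / 2 ^ (q + 2) by field_simp] at hlevels
  have hmain := hlevels.trans (Finset.sum_le_sum fun k _ => hpoint k)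
  rw [← Finset.mul_sum] at hmain
  set S := ∑ j ∈ Finset.range (L + 1), ∑ i, levelDensity Φ μ u (R / 2 ^ j) (W j) i
  have hhalf : 1 / 2 ≤ 2 ^ (q + 1) * (S - 1 / 2 ^ (q + 2)) := by
    rw [mul_sub, show (2 : ℝ) ^ (q + 1) * (1 / 2 ^ (q + 2)) = 1 / 2 by field_simp; ring]
    linarith
  calc (m : ℝ) = 8 * (m / 4 * (1 / 2)) := by ring
    _ ≤ 8 * (m / 4 * (2 ^ (q + 1) * (S - 1 / 2 ^ (q + 2)))) := by gcongr
    _ = 8 * 2 ^ (q + 1) * (m / 4 * (S - 1 / 2 ^ (q + 2))) := by ring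
    _ ≤ 8 * 2 ^ (q + 1) * (3 * 2 ^ (q + 1) * ∑ k, Φ |inner ℝ v (u (x k))|) := by gcongr
    _ = 96 * 4 ^ q * ∑ k, Φ |inner ℝ v (u (x k))| := by
        rw [show (4 : ℝ) = 2 * 2 by norm_num, mul_pow]; ring

theorem exists_nat_two_pow_level {R : ℝ} (hR : 1 ≤ R) :
    ∃ L : ℕ, 16 * R ≤ 2 ^ L ∧ (2 : ℝ) ^ L ≤ 32 * R ∧ (L : ℝ) + 1 ≤ Real.logb 2 (64 * R) := by
  obtain ⟨n, hlow, hup⟩ := exists_nat_pow_near (by linarith : 1 ≤ 16 * R) one_lt_two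
  have hpow : (2 : ℝ) ^ (n + 1) ≤ 32 * R := by rw [pow_succ]; linarith
  refine ⟨n + 1, hup.le, hpow, ?_⟩
  rw [Real.le_logb_iff_rpow_le one_lt_two (by positivity), Real.rpow_add_one two_ne_zero,
    Real.rpow_natCast]
  linarith

theorem nat_add_one_lt_exp_mul_rpow {L : ℕ} {M h y s : ℝ} (hL : 2 ^ L ≤ M) (hh : Real.log M < h)
    (hy : 1 ≤ y) (hs : 0 ≤ s) : (L : ℝ) + 1 < Real.exp (h * y ^ s) := by
  have hM : 1 ≤ M := (one_le_pow₀ one_le_two).trans hL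
  have hLcard : (L : ℝ) + 1 ≤ 2 ^ L := by exact_mod_cast Nat.lt_two_pow_self (n := L)
  refine (hLcard.trans hL).trans_lt ((Real.log_lt_iff_lt_exp (by linarith)).1 (hh.trans_le ?_))
  exact le_mul_of_one_le_right ((Real.log_nonneg hM).trans hh.le) (Real.one_le_rpow hy hs)

theorem DilationMajorant.mul_map_level_le (hΨ : DilationMajorant Φ Ψ r q a) {R h : ℝ} (hR : 0 < R)
    (hh : 0 ≤ h) {L m : ℕ} (hL : (L : ℝ) + 1 ≤ Real.logb 2 (64 * R))
    (hm : 96 * 8 ^ q * a * Real.logb 2 (64 * R) * h * Ψ R ≤ m) (j : ℕ) :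
    8 * (h * (2 ^ j) ^ r) * (3 * Ψ (4 * (R / 2 ^ j))) ≤ m * (1 / (2 ^ (q + 2) * (L + 1))) := by
  rw [mul_one_div, le_div_iff₀ (by positivity)]
  calc 8 * (h * (2 ^ j) ^ r) * (3 * Ψ (4 * (R / 2 ^ j))) * (2 ^ (q + 2) * (L + 1))
      = 96 * 2 ^ q * h * (L + 1) * (Ψ (4 * R / 2 ^ j) * (2 ^ j) ^ r) := by
        rw [mul_div_assoc]; ring
    _ ≤ 96 * 2 ^ q * h * Real.logb 2 (64 * R) * (4 ^ q * a * Ψ R) := by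
        have hlevel := hΨ.map_level_mul_le hR j
        have hpos := (hΨ.pos _ (by positivity : 0 < 4 * R / 2 ^ j)).le
        have : 0 ≤ a := zero_le_one.trans hΨ.one_le
        have hlog : 0 ≤ Real.logb 2 (64 * R) := le_trans (by positivity) hL
        gcongr
    _ = 96 * 8 ^ q * a * Real.logb 2 (64 * R) * h * Ψ R := by
        rw [show (8 : ℝ) = 2 * 4 by norm_num, mul_pow]; ring
    _ ≤ m := hm

theorem LewisPosition.exists_sample (hL : LewisPosition Φ r R μ u) (hΦ : PowerGrowth Φ r q)
    (hr2 : r ≤ 2) (hΨ : DilationMajorant Φ Ψ r q a) (hμ : ∀ i, 0 < μ i) (hμ1 : ∑ i, μ i = 1)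
    (hR : 1 ≤ R) {h : ℝ} (hh : Real.log (32 * R) < h)
    (hnet : ∀ j : ℕ, 2 ^ j ≤ 32 * R → ∃ T, IsModularNet Φ μ u T (R / 2 ^ j) ∧
      T.card ≤ Real.exp (h * (2 ^ j) ^ r))
    {m : ℕ} (hm : 96 * 8 ^ q * a * Real.logb 2 (64 * R) * h * Ψ R ≤ m) :
    ∃ x : Fin m → ι, ∀ v, ∑ i, μ i * Φ |inner ℝ v (u i)| = 1 →
      m ≤ 96 * 4 ^ q * ∑ k, Φ |inner ℝ v (u (x k))| := by
  have hR0 : 0 < R := zero_lt_one.trans_le hR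
  have hμ0 : ∀ i, 0 ≤ μ i := fun i => (hμ i).le
  have hh0 : 0 < h := (Real.log_nonneg (by linarith)).trans_lt hh
  obtain ⟨L, hLlow, hLup, hLlog⟩ := exists_nat_two_pow_level hR
  have hj : ∀ j ≤ L, (2 : ℝ) ^ j ≤ 32 * R := fun j hjL =>
    (pow_le_pow_right₀ one_le_two hjL).trans hLup
  have hLexp : ∀ j : ℕ, (L : ℝ) + 1 < Real.exp (h * (2 ^ j) ^ r) := fun j =>
    nat_add_one_lt_exp_mul_rpow hLup hh (one_le_pow₀ one_le_two) (zero_le_one.trans hΦ.one_le)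
  choose! T hT hTcard using hnet
  obtain ⟨τ, hτ, hτ1, hμτ, hντ⟩ := exists_density_dominating hμ hμ1
    (fun i => mul_nonneg (hμ0 i) (hΦ.nonneg (norm_nonneg (u i)))) hL.sum_le_two
  have hV : ∀ j : ℕ, 0 < Ψ (4 * (R / 2 ^ j)) := fun j => hΨ.pos _ (by positivity)
  have hdens : ∀ (j : ℕ) (w : E) (i : ι),
      levelDensity Φ μ u (R / 2 ^ j) w i ≤ 3 * Ψ (4 * (R / 2 ^ j)) * τ i := fun j w i => by
    refine (levelDensity_le hΦ hΨ hμ0 (by positivity) w i).trans ?_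
    rw [mul_right_comm, mul_comm]
    exact mul_le_mul_of_nonneg_right (hντ i) (hV j).le
  obtain ⟨x, hx⟩ := exists_sample_forall_mem_le_sum hτ hτ1
    (fun j w i => levelDensity_nonneg hΦ hμ0 (by positivity) w i) hdens
    (fun j => mul_pos three_pos (hV j)) (fun j hjL => hTcard j (hj j hjL)) hLexp
    (fun j => hΨ.mul_map_level_le hR0 hh0.le hLlog hm j)
  refine ⟨x, fun v hv => ?_⟩
  have hvball : v ∈ modularBall Φ μ u := hv.le
  choose! W hWT hW using fun j hjL => (hT j (hj j hjL)).exists_near v hvball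
  exact hL.card_le_mul_sum_of_levels hΦ hμ0 hR0 hτ hμτ hLlow
    (hL.norm_le hΦ hr2 hμ0 hR0.le hvball) hv hW fun j hjL hθ => hx j hjL (W j) (hWT j hjL) hθ

end Levels

/-! ### Sampling finite-dimensional spaces of functions -/

section FunctionSpace

open Module

variable {Φ Ψ : ℝ → ℝ} {r R a : ℝ} {q : ℕ}

theorem logb_two_le_two_mul {x : ℝ} (hx : 0 < x) : Real.logb 2 x ≤ 2 * x := by
  have hlog2 := Real.log_two_gt_d9
  rw [Real.logb, div_le_iff₀ (by linarith)]
  nlinarith [Real.log_le_sub_one_of_pos hx]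

theorem exists_spanning_family_representing {ι : Type*} (Y : Submodule ℝ (ι → ℝ))
    [FiniteDimensional ℝ Y] :
    ∃ u : ι → EuclideanSpace ℝ (Fin (finrank ℝ Y)), Submodule.span ℝ (Set.range u) = ⊤ ∧
      ∀ f ∈ Y, ∃ v, ∀ i, inner ℝ v (u i) = f i := by
  let b := finBasis ℝ Y
  let u : ι → EuclideanSpace ℝ (Fin (finrank ℝ Y)) :=
    fun i => WithLp.toLp 2 fun k => (b k : ι → ℝ) i
  have hinner : ∀ v i, inner ℝ v (u i) = ((∑ k, v k • b k : Y) : ι → ℝ) i := fun v i => by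
    simp [u, PiLp.inner_apply, mul_comm]
  refine ⟨u, ?_, fun f hf => ⟨WithLp.toLp 2 fun k => b.repr ⟨f, hf⟩ k, fun i => ?_⟩⟩
  · refine (Submodule.orthogonal_eq_bot_iff).1 (Submodule.eq_bot_iff _ |>.2 fun v hv => ?_)
    have hzero : ∑ k, v k • b k = 0 := by
      ext i
      rw [← hinner, real_inner_comm]
      exact (Submodule.mem_orthogonal _ _).1 hv _ (Submodule.subset_span ⟨i, rfl⟩)
    ext k
    exact Fintype.linearIndependent_iff.1 b.linearIndependent _ hzero k
  · rw [hinner]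
    exact congrFun (congrArg Subtype.val (b.sum_repr ⟨f, hf⟩)) i

variable {ι : Type*} [Fintype ι] {μ : ι → ℝ}

theorem exists_lewisPosition_representing (hΦ : PowerGrowth Φ r q) (hμ : ∀ i, 0 < μ i)
    (Y : Submodule ℝ (ι → ℝ)) (hY : 0 < finrank ℝ Y) (hR : 2 ^ (q + 7) * finrank ℝ Y ≤ R ^ r) :
    ∃ u : ι → EuclideanSpace ℝ (Fin (finrank ℝ Y)), LewisPosition Φ r R μ u ∧
      ∀ f ∈ Y, ∃ v, ∀ i, inner ℝ v (u i) = f i := by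
  obtain ⟨u, hspan, hrep⟩ := exists_spanning_family_representing Y
  obtain ⟨A, hA, hL⟩ := exists_lewisPosition hΦ hμ (by simpa using hY) hspan (by simpa using hR)
  refine ⟨fun i => A (u i), hL, fun f hf => ?_⟩
  obtain ⟨v, hv⟩ := hrep f hf
  let e := A.toContinuousLinearEquivOfDetNeZero hA
  refine ⟨ContinuousLinearMap.adjoint (e.symm : _ →L[ℝ] _) v, fun i => ?_⟩
  rw [ContinuousLinearMap.adjoint_inner_left, ← hv i]
  exact congrArg (inner ℝ v) (e.symm_apply_apply (u i))

theorem exists_smul_sum_map_eq_one (hΦ : PowerGrowth Φ r q) {f : ι → ℝ}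
    (hf : 1 ≤ ∑ i, μ i * Φ |f i|) :
    ∃ t ∈ Set.Icc (0 : ℝ) 1, ∑ i, μ i * Φ |(t • f) i| = 1 := by
  have hcont : Continuous fun t : ℝ => ∑ i, μ i * Φ |(t • f) i| :=
    continuous_finsetSum _ fun i _ => continuous_const.mul
      (hΦ.continuous_comp_abs.comp (by fun_prop : Continuous fun t : ℝ => t * f i))
  exact intermediate_value_Icc zero_le_one hcont.continuousOn ⟨by simp [hΦ.map_zero], by simpa⟩

theorem exists_sample_of_modularNet (hΦ : PowerGrowth Φ r q) (hr2 : r ≤ 2)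
    (hΨ : DilationMajorant Φ Ψ r q a) (hμ : ∀ i, 0 < μ i) (hμ1 : ∑ i, μ i = 1)
    {Y : Submodule ℝ (ι → ℝ)} (hR : 1 ≤ R) (hYR : 2 ^ (q + 7) * finrank ℝ Y ≤ R ^ r) {h : ℝ}
    (hh : Real.log (32 * R) < h)
    (hnet : ∀ u : ι → EuclideanSpace ℝ (Fin (finrank ℝ Y)), LewisPosition Φ r R μ u →
      ∀ j : ℕ, 2 ^ j ≤ 32 * R → ∃ T, IsModularNet Φ μ u T (R / 2 ^ j) ∧
        T.card ≤ Real.exp (h * (2 ^ j) ^ r))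
    {m : ℕ} (hm : 96 * 8 ^ q * a * Real.logb 2 (64 * R) * h * Ψ R ≤ m) :
    ∃ x : Fin m → ι, ∀ f ∈ Y, 1 ≤ ∑ i, μ i * Φ |f i| →
      m ≤ ∑ k, Φ (96 * 4 ^ q * |f (x k)|) := by
  rcases (finrank ℝ Y).eq_zero_or_pos with hY | hY
  · have : Nonempty ι := by
      by_contra hempty
      simp [not_nonempty_iff.1 hempty] at hμ1
    refine ⟨fun _ => Classical.arbitrary ι, fun f hf h1 => ?_⟩
    rw [Submodule.finrank_eq_zero.1 hY, Submodule.mem_bot] at hf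
    simp only [hf, Pi.zero_apply, abs_zero, hΦ.map_zero, mul_zero, Finset.sum_const_zero] at h1
    exact absurd h1 (by norm_num)
  obtain ⟨u, hL, hrep⟩ := exists_lewisPosition_representing hΦ hμ Y hY hYR
  obtain ⟨x, hx⟩ := hL.exists_sample hΦ hr2 hΨ hμ hμ1 hR hh (hnet u hL) hm
  refine ⟨x, fun f hf hf1 => ?_⟩
  obtain ⟨t, ⟨ht0, ht1⟩, ht⟩ := exists_smul_sum_map_eq_one hΦ hf1
  obtain ⟨v, hv⟩ := hrep (t • f) (Y.smul_mem t hf)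
  have hsample := hx v (by simpa only [hv] using ht)
  rw [Finset.mul_sum] at hsample
  refine hsample.trans (Finset.sum_le_sum fun k _ => ?_)
  have hfactor : (1 : ℝ) ≤ 96 * 4 ^ q := by
    linarith [one_le_pow₀ (n := q) (by norm_num : (1 : ℝ) ≤ 4)]
  have hshrink : |(t • f) (x k)| ≤ |f (x k)| := by
    rw [Pi.smul_apply, smul_eq_mul, abs_mul, abs_of_nonneg ht0]
    exact mul_le_of_le_one_left (abs_nonneg _) ht1
  rw [hv]
  exact (mul_le_mul_of_nonneg_left (hΦ.mono (abs_nonneg _) hshrink) (by positivity)).trans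
    (hΦ.mul_le hfactor (abs_nonneg _))

theorem exists_sample_of_card_le (hΦ : PowerGrowth Φ r q) (hr2 : r ≤ 2)
    (hΨ : DilationMajorant Φ Ψ r q a) (hμ : ∀ i, 0 < μ i) (hμ1 : ∑ i, μ i = 1)
    {Y : Submodule ℝ (ι → ℝ)} (hR : 1 ≤ R) (hYR : 2 ^ (q + 7) * finrank ℝ Y ≤ R ^ r) {n : ℝ}
    (hRn : 32 * R ≤ n) (hn : Fintype.card ι ≤ n) {m : ℕ}
    (hm : 96 * 8 ^ q * a * Real.logb 2 (64 * R) * (17 * Real.log (4 * n)) * Ψ R ≤ m) :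
    ∃ x : Fin m → ι, ∀ f ∈ Y, 1 ≤ ∑ i, μ i * Φ |f i| →
      m ≤ ∑ k, Φ (96 * 4 ^ q * |f (x k)|) := by
  have hn1 : 1 ≤ n := by linarith
  refine exists_sample_of_modularNet hΦ hr2 hΨ hμ hμ1 hR hYR ?_ (fun u hL j _ =>
    hL.exists_isModularNet hΦ hr2 (fun i => (hμ i).le) (zero_lt_one.trans_le hR) hn1 hn j) hm
  have hle := Real.log_le_log (by positivity) (by linarith : 32 * R ≤ 4 * n)
  linarith [one_le_log_four_mul hn1]

theorem exists_sample_of_finrank_le (hΦ : PowerGrowth Φ r q) (hr2 : r ≤ 2)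
    (hΨ : DilationMajorant Φ Ψ r q a) (hμ : ∀ i, 0 < μ i) (hμ1 : ∑ i, μ i = 1)
    {Y : Submodule ℝ (ι → ℝ)} (hR : 1 ≤ R) (hYR : 2 ^ (q + 7) * finrank ℝ Y ≤ R ^ r) {n : ℝ}
    (hn : 1 ≤ n) (hYn : finrank ℝ Y ≤ n) {m : ℕ}
    (hm : 96 * 8 ^ q * a * Real.logb 2 (64 * R) * (129 * Real.log (4 * n) * n * R) * Ψ R ≤ m) :
    ∃ x : Fin m → ι, ∀ f ∈ Y, 1 ≤ ∑ i, μ i * Φ |f i| →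
      m ≤ ∑ k, Φ (96 * 4 ^ q * |f (x k)|) := by
  refine exists_sample_of_modularNet hΦ hr2 hΨ hμ hμ1 hR hYR ?_ (fun u hL j hj =>
    hL.exists_isModularNet_of_two_pow_le hΦ hr2 (fun i => (hμ i).le) hR hn (by simpa using hYn) hj)
    hm
  calc Real.log (32 * R) < 32 * R :=
        (Real.log_le_sub_one_of_pos (by positivity)).trans_lt (sub_one_lt _)
    _ ≤ 129 * (Real.log (4 * n) * n) * R := by
        gcongr
        linarith [one_le_mul_of_one_le_of_one_le (one_le_log_four_mul hn) hn]
    _ = 129 * Real.log (4 * n) * n * R := by ring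

theorem exists_sample_of_two_stages {Ω : Type*} {z : ι → Ω} (hΦ : PowerGrowth Φ r q) (hr2 : r ≤ 2)
    (hΨ : DilationMajorant Φ Ψ r q a) (hμ : ∀ i, 0 < μ i) (hμ1 : ∑ i, μ i = 1)
    {X : Submodule ℝ (Ω → ℝ)} [FiniteDimensional ℝ X] {N : ℝ} (hN : 1 ≤ N) (hXN : finrank ℝ X ≤ N)
    (hR : 1 ≤ R) (hNR : 2 ^ (q + 7) * N ≤ R ^ r) {m₁ m₂ : ℕ} (hRm : 32 * R ≤ m₁)
    (hm₁ : 96 * 8 ^ q * a * Real.logb 2 (64 * R) * (129 * Real.log (4 * N) * N * R) * Ψ R ≤ m₁)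
    (hm₂ : 96 * 8 ^ q * a * Real.logb 2 (64 * R) * (17 * Real.log (4 * m₁)) * Ψ R ≤ m₂) :
    ∃ x : Fin m₂ → Ω, ∀ f ∈ X, 1 ≤ ∑ i, μ i * Φ |f (z i)| →
      m₂ ≤ ∑ k, Φ ((96 * 4 ^ q) ^ 2 * |f (x k)|) := by
  set A : ℝ := 96 * 4 ^ q
  have hA0 : 0 ≤ A := by positivity
  have hrank : (finrank ℝ (X.map (LinearMap.funLeft ℝ ℝ z)) : ℝ) ≤ N :=
    (Nat.cast_le.2 (Submodule.finrank_map_le _ X)).trans hXN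
  obtain ⟨x₁, hx₁⟩ := exists_sample_of_finrank_le hΦ hr2 hΨ hμ hμ1 hR
    ((mul_le_mul_of_nonneg_left hrank (by positivity)).trans hNR) hN hrank hm₁
  have hrank' : (finrank ℝ (X.map (LinearMap.funLeft ℝ ℝ fun k => z (x₁ k))) : ℝ) ≤ N :=
    (Nat.cast_le.2 (Submodule.finrank_map_le _ X)).trans hXN
  have hm₁pos : (0 : ℝ) < m₁ := by linarith
  have hcard : (Fintype.card (Fin m₁) : ℝ) ≤ m₁ := by rw [Fintype.card_fin]
  have huniform : ∑ _k : Fin m₁, (m₁ : ℝ)⁻¹ = 1 := by simp [hm₁pos.ne']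
  obtain ⟨x₂, hx₂⟩ := exists_sample_of_card_le hΦ hr2 hΨ (fun _ => inv_pos.2 hm₁pos) huniform hR
    ((mul_le_mul_of_nonneg_left hrank' (by positivity)).trans hNR) hRm hcard hm₂
  refine ⟨fun k => z (x₁ (x₂ k)), fun f hf hf1 => ?_⟩
  have hcoarse : (m₁ : ℝ) ≤ ∑ k, Φ (A * |f (z (x₁ k))|) := hx₁ _ (Submodule.mem_map_of_mem hf) hf1
  have hscale : ∀ ω, |(A • f) ω| = A * |f ω| := fun ω => by
    rw [Pi.smul_apply, smul_eq_mul, abs_mul, abs_of_nonneg hA0]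
  have hfine : (m₂ : ℝ) ≤ ∑ k, Φ (A * |(A • f) (z (x₁ (x₂ k)))|) :=
    hx₂ _ (Submodule.mem_map_of_mem (X.smul_mem A hf)) (by
      rw [← Finset.mul_sum, ← div_eq_inv_mul, one_le_div hm₁pos]
      exact hcoarse.trans_eq (Finset.sum_congr rfl fun k _ => congrArg Φ (hscale _).symm))
  simpa only [hscale, ← mul_assoc, ← sq] using hfine

theorem logb_two_mul_pow_le {D x : ℝ} (hD : 1 ≤ D) (hx : 1 ≤ x) (k : ℕ) :
    Real.logb 2 (D * x ^ k) ≤ (Real.logb 2 D + k) * Real.logb 2 (2 * x) := by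
  have hlogD := Real.logb_nonneg one_lt_two hD
  have hlogx := Real.logb_nonneg one_lt_two hx
  rw [Real.logb_mul (by positivity) (by positivity), Real.logb_mul two_ne_zero (by positivity),
    Real.logb_pow, Real.logb_self_eq_one one_lt_two]
  nlinarith [mul_nonneg hlogD hlogx]

theorem one_le_logb_two_two_mul {x : ℝ} (hx : 1 ≤ x) : 1 ≤ Real.logb 2 (2 * x) := by
  rw [Real.le_logb_iff_rpow_le one_lt_two (by linarith), Real.rpow_one]
  linarith

theorem log_le_logb_two {x : ℝ} (hx : 1 ≤ x) : Real.log x ≤ Real.logb 2 x :=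
  le_div_self (Real.log_nonneg hx) (Real.log_pos one_lt_two)
    (Real.log_two_lt_d9.le.trans (by norm_num))

theorem DilationMajorant.coarse_size_le (hΨ : DilationMajorant Φ Ψ r q a) {N B : ℝ} (hN : 1 ≤ N)
    (hR : 1 ≤ R) (hRB : R ≤ B * N) :
    96 * 8 ^ q * a * Real.logb 2 (64 * R) * (129 * Real.log (4 * N) * N * R) * Ψ R ≤
      96 * 8 ^ q * a * (128 * B) * (516 * B) * (B ^ q * Ψ 1) * N ^ (q + 4) := by
  have ha := zero_le_one.trans hΨ.one_le
  have hB : 0 < B := pos_of_mul_pos_left (by linarith : 0 < B * N) (by linarith)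
  have hlogb : Real.logb 2 (64 * R) ≤ 128 * (B * N) :=
    (logb_two_le_two_mul (by positivity)).trans (by linarith)
  have hlog : Real.log (4 * N) ≤ 4 * N :=
    (Real.log_le_sub_one_of_pos (by positivity)).trans (sub_one_lt _).le
  have hlog0 : 0 ≤ Real.log (4 * N) := Real.log_nonneg (by linarith)
  have hΨ1 := hΨ.pos 1 one_pos
  have hΨR : Ψ R ≤ (B * N) ^ q * Ψ 1 := by
    have hpow := hΨ.le_pow_mul R 1 hR one_pos
    rw [mul_one] at hpow
    exact hpow.trans (by gcongr)
  have hΨR0 := (hΨ.pos R (by linarith)).le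
  calc 96 * 8 ^ q * a * Real.logb 2 (64 * R) * (129 * Real.log (4 * N) * N * R) * Ψ R
      ≤ 96 * 8 ^ q * a * (128 * (B * N)) * (129 * (4 * N) * N * (B * N)) *
          ((B * N) ^ q * Ψ 1) := by gcongr
    _ = 96 * 8 ^ q * a * (128 * B) * (516 * B) * (B ^ q * Ψ 1) * N ^ (q + 4) := by
        rw [mul_pow]; ring

theorem DilationMajorant.exists_coarse_size (hΨ : DilationMajorant Φ Ψ r q a) {B : ℝ} (hB : 1 ≤ B) :
    ∃ c : ℝ, 0 < c ∧ ∀ N R : ℝ, 1 ≤ N → 1 ≤ R → R ≤ B * N → ∃ m : ℕ, 32 * R ≤ m ∧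
      96 * 8 ^ q * a * Real.logb 2 (64 * R) * (129 * Real.log (4 * N) * N * R) * Ψ R ≤ m ∧
      Real.log (4 * m) ≤ c * Real.logb 2 (2 * N) := by
  set D : ℝ := 96 * 8 ^ q * a * (128 * B) * (516 * B) * (B ^ q * Ψ 1) + 32 * B with hD
  have ha := zero_le_one.trans hΨ.one_le
  have hΨ1 := hΨ.pos 1 one_pos
  have hcoef : 0 ≤ 96 * 8 ^ q * a * (128 * B) * (516 * B) * (B ^ q * Ψ 1) := by positivity
  have hD1 : 1 ≤ D := by linarith
  refine ⟨Real.logb 2 (8 * D) + (q + 4 : ℕ), ?_, fun N R hN hR hRB => ?_⟩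
  · have := Real.logb_nonneg one_lt_two (by linarith : 1 ≤ 8 * D)
    positivity
  have hpow : 1 ≤ N ^ (q + 4) := one_le_pow₀ hN
  have hsize : 1 ≤ D * N ^ (q + 4) := one_le_mul_of_one_le_of_one_le hD1 hpow
  have hceil := Nat.le_ceil (D * N ^ (q + 4))
  have hceil' := Nat.ceil_lt_add_one (zero_le_one.trans hsize)
  have hNpow : B * N ≤ B * N ^ (q + 4) := by
    gcongr
    exact le_self_pow₀ hN (by omega)
  refine ⟨⌈D * N ^ (q + 4)⌉₊, ?_, (hΨ.coarse_size_le hN hR hRB).trans ?_, ?_⟩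
  · refine le_trans ?_ hceil
    rw [hD, add_mul]
    linarith [mul_nonneg hcoef (zero_le_one.trans hpow)]
  · refine le_trans (mul_le_mul_of_nonneg_right ?_ (by positivity)) hceil
    linarith
  · calc Real.log (4 * ⌈D * N ^ (q + 4)⌉₊)
        ≤ Real.log (8 * D * N ^ (q + 4)) := Real.log_le_log (by linarith) (by linarith)
      _ ≤ Real.logb 2 (8 * D * N ^ (q + 4)) := log_le_logb_two (by linarith)
      _ ≤ _ := logb_two_mul_pow_le (by linarith) hN _

theorem DilationMajorant.map_one_le (hΨ : DilationMajorant Φ Ψ r q a) (hr : 0 ≤ r) {y : ℝ}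
    (hy : 1 ≤ y) : Ψ 1 ≤ a * Ψ y :=
  calc Ψ 1 ≤ y ^ r * Ψ 1 := le_mul_of_one_le_left (hΨ.pos 1 one_pos).le (Real.one_le_rpow hy hr)
    _ ≤ a * Ψ (y * 1) := hΨ.rpow_mul_le y 1 hy one_pos
    _ = a * Ψ y := by rw [mul_one]

theorem DilationMajorant.map_mul_rpow_le (hΨ : DilationMajorant Φ Ψ r q a) (hr : 1 ≤ r) {B N : ℝ}
    (hB : 1 ≤ B) (hN : 1 ≤ N) : Ψ ((B * N) ^ (1 / r)) ≤ B ^ q * Ψ (N ^ (1 / r)) := by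
  have hroot : 0 < N ^ (1 / r) := by positivity
  have hB' : B ^ (1 / r) ≤ B :=
    Real.rpow_le_self_of_one_le hB ((div_le_one (zero_lt_one.trans_le hr)).2 hr)
  have hΨN := hΨ.pos _ hroot
  rw [Real.mul_rpow (by positivity) (by positivity)]
  refine (hΨ.le_pow_mul _ _ (Real.one_le_rpow hB (by positivity)) hroot).trans ?_
  gcongr

theorem DilationMajorant.fine_size_le (hΨ : DilationMajorant Φ Ψ r q a) (hr : 1 ≤ r) {B N : ℝ}
    (hB : 1 ≤ B) (hN : 1 ≤ N) {c M : ℝ} (hc : 0 ≤ c) (hM : 0 ≤ Real.log M)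
    (hMc : Real.log M ≤ c * Real.logb 2 (2 * N)) :
    96 * 8 ^ q * a * Real.logb 2 (64 * (B * N) ^ (1 / r)) * (17 * Real.log M) *
        Ψ ((B * N) ^ (1 / r)) ≤
      96 * 8 ^ q * a * (Real.logb 2 (64 * B) + 1) * (17 * c) * B ^ q * Ψ (N ^ (1 / r)) *
        Real.logb 2 (2 * N) ^ 2 := by
  have hBN : 1 ≤ B * N := one_le_mul_of_one_le_of_one_le hB hN
  have hRB : (B * N) ^ (1 / r) ≤ B * N :=
    Real.rpow_le_self_of_one_le hBN ((div_le_one (zero_lt_one.trans_le hr)).2 hr)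
  set l := Real.logb 2 (2 * N)
  have hl : 1 ≤ l := one_le_logb_two_two_mul hN
  have hlogR : Real.logb 2 (64 * (B * N) ^ (1 / r)) ≤ (Real.logb 2 (64 * B) + 1) * l := by
    refine (Real.logb_le_logb_of_le one_lt_two (by positivity)
      (by linarith : _ ≤ 64 * B * N ^ 1)).trans ?_
    exact_mod_cast logb_two_mul_pow_le (by linarith : 1 ≤ 64 * B) hN 1
  have hlogB : 0 ≤ Real.logb 2 (64 * B) := Real.logb_nonneg one_lt_two (by linarith)
  have ha := zero_le_one.trans hΨ.one_le
  have hΨR := (hΨ.pos ((B * N) ^ (1 / r)) (by positivity)).le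
  calc _ ≤ 96 * 8 ^ q * a * ((Real.logb 2 (64 * B) + 1) * l) * (17 * (c * l)) *
        (B ^ q * Ψ (N ^ (1 / r))) := by
        gcongr
        exact hΨ.map_mul_rpow_le hr hB hN
    _ = _ := by ring

theorem DilationMajorant.exists_sizes (hr : 1 ≤ r) (hΨ : DilationMajorant Φ Ψ r q a) :
    ∃ c : ℝ, 0 < c ∧ ∀ N : ℝ, 1 ≤ N → ∃ (R : ℝ) (m₁ m₂ : ℕ), 1 ≤ R ∧ 2 ^ (q + 7) * N ≤ R ^ r ∧
      32 * R ≤ m₁ ∧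
      96 * 8 ^ q * a * Real.logb 2 (64 * R) * (129 * Real.log (4 * N) * N * R) * Ψ R ≤ m₁ ∧
      96 * 8 ^ q * a * Real.logb 2 (64 * R) * (17 * Real.log (4 * m₁)) * Ψ R ≤ m₂ ∧
      0 < m₂ ∧ m₂ ≤ c * Ψ (N ^ (1 / r)) * Real.logb 2 (2 * N) ^ 2 := by
  set B : ℝ := 2 ^ (q + 7)
  have hB : 1 ≤ B := one_le_pow₀ one_le_two
  obtain ⟨c₁, hc₁, hcoarse⟩ := hΨ.exists_coarse_size hB
  have ha := hΨ.one_le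
  have hΨ1 := hΨ.pos 1 one_pos
  set c₂ : ℝ := Real.logb 2 (64 * B) + 1
  have hc₂ : 0 < c₂ :=
    add_pos_of_nonneg_of_pos (Real.logb_nonneg one_lt_two (by linarith)) (by norm_num)
  set c₃ : ℝ := 96 * 8 ^ q * a * c₂ * (17 * c₁) * B ^ q
  refine ⟨c₃ + a / Ψ 1, by positivity, fun N hN => ?_⟩
  have hBN : 1 ≤ B * N := one_le_mul_of_one_le_of_one_le hB hN
  have hΨN := hΨ.pos (N ^ (1 / r)) (by positivity)
  set R : ℝ := (B * N) ^ (1 / r) with hRdef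
  have hR : 1 ≤ R := Real.one_le_rpow hBN (by positivity)
  obtain ⟨m₁, hRm, hm₁, hlogm⟩ := hcoarse N R hN hR
    (Real.rpow_le_self_of_one_le hBN ((div_le_one (zero_lt_one.trans_le hr)).2 hr))
  set l := Real.logb 2 (2 * N)
  have hl : 1 ≤ l := one_le_logb_two_two_mul hN
  have hm₂ : 96 * 8 ^ q * a * Real.logb 2 (64 * R) * (17 * Real.log (4 * m₁)) * Ψ R ≤
      c₃ * Ψ (N ^ (1 / r)) * l ^ 2 :=
    hΨ.fine_size_le hr hB hN hc₁.le (Real.log_nonneg (by linarith)) hlogm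
  have hunit : 1 ≤ a / Ψ 1 * Ψ (N ^ (1 / r)) := by
    rw [div_mul_eq_mul_div, one_le_div hΨ1]
    exact hΨ.map_one_le (by linarith) (Real.one_le_rpow hN (by positivity))
  have hsize : 0 < c₃ * Ψ (N ^ (1 / r)) * l ^ 2 := by positivity
  refine ⟨R, m₁, ⌈c₃ * Ψ (N ^ (1 / r)) * l ^ 2⌉₊, hR, ?_, hRm, hm₁, hm₂.trans (Nat.le_ceil _),
    Nat.ceil_pos.2 hsize, (Nat.ceil_lt_add_one hsize.le).le.trans ?_⟩
  · rw [hRdef, one_div, Real.rpow_inv_rpow (by positivity) (by positivity)]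
  · rw [add_mul, add_mul]
    linarith [one_le_mul_of_one_le_of_one_le hunit (one_le_pow₀ hl : 1 ≤ l ^ 2)]

theorem exists_weighted_sample.{u, v} (hΦ : PowerGrowth Φ r q) (hr2 : r ≤ 2)
    (hΨ : DilationMajorant Φ Ψ r q a) :
    ∃ c : ℝ, 0 < c ∧ ∀ N : ℝ, 1 ≤ N → ∃ m : ℕ, 0 < m ∧
      m ≤ c * Ψ (N ^ (1 / r)) * Real.logb 2 (2 * N) ^ 2 ∧
      ∀ {Ω : Type u} {ι : Type v} [Fintype ι] (z : ι → Ω) (μ : ι → ℝ), (∀ i, 0 < μ i) →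
        ∑ i, μ i = 1 → ∀ (X : Submodule ℝ (Ω → ℝ)) [FiniteDimensional ℝ X], finrank ℝ X ≤ N →
        ∃ x : Fin m → Ω, ∀ f ∈ X, 1 ≤ ∑ i, μ i * Φ |f (z i)| →
          m ≤ ∑ k, Φ ((96 * 4 ^ q) ^ 2 * |f (x k)|) := by
  obtain ⟨c, hc, hsizes⟩ := hΨ.exists_sizes hΦ.one_le
  refine ⟨c, hc, fun N hN => ?_⟩
  obtain ⟨R, m₁, m, hR, hNR, hRm, hm₁, hm₂, hm, hmc⟩ := hsizes N hN
  exact ⟨m, hm, hmc, fun z μ hμ hμ1 X _ hXN =>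
    exists_sample_of_two_stages hΦ hr2 hΨ hμ hμ1 hN hXN hR hNR hRm hm₁ hm₂⟩

end FunctionSpace

/-! ### From probability measures to weighted point evaluations -/

section Discretization

open Module

theorem exists_lagrange_basis {Ω : Type*} (X : Submodule ℝ (Ω → ℝ)) [FiniteDimensional ℝ X] :
    ∃ (y : Fin (finrank ℝ X) → Ω) (l : Fin (finrank ℝ X) → Ω → ℝ), (∀ k, l k ∈ X) ∧
      ∀ f ∈ X, ∀ ω, f ω = ∑ k, f (y k) * l k ω := by
  classical
  let eval : Ω → Dual ℝ X := fun ω => (LinearMap.proj ω).comp X.subtype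
  have hspan : Submodule.span ℝ (Set.range eval) = ⊤ :=
    Submodule.span_eq_top_of_ne_zero fun f hf => by
      obtain ⟨ω, hω⟩ := Function.ne_iff.1 (Subtype.coe_ne_coe.2 hf)
      exact ⟨eval ω, ⟨ω, rfl⟩, hω⟩
  obtain ⟨κ, y, -, hy, hindep⟩ := exists_linearIndependent' ℝ eval
  let B : Basis κ ℝ (Dual ℝ X) := Basis.mk hindep (hy.trans hspan).ge
  have : Fintype κ := FiniteDimensional.fintypeBasisIndex B
  have hcard : Fintype.card κ = finrank ℝ X := by
    rw [← finrank_eq_card_basis B, Subspace.dual_finrank_eq]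
  let B' := B.reindex (Fintype.equivFinOfCardEq hcard)
  have hB' : ∀ k, B' k = eval (y ((Fintype.equivFinOfCardEq hcard).symm k)) := fun k => by
    simp [B', B]
  refine ⟨fun k => y ((Fintype.equivFinOfCardEq hcard).symm k),
    fun k => (evalEquiv ℝ X).symm (B'.coord k), fun k => Subtype.coe_prop _, fun f hf ω => ?_⟩
  have hrepr := congrArg (fun L : Dual ℝ X => L ⟨f, hf⟩) (B'.sum_repr (eval ω))
  simp only [LinearMap.sum_apply, LinearMap.smul_apply, smul_eq_mul, hB'] at hrepr
  refine hrepr.symm.trans (Finset.sum_congr rfl fun k _ => ?_)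
  rw [mul_comm]
  congr 1
  exact (apply_evalEquiv_symm_apply ℝ X (eval ω) (B'.coord k)).symm

theorem exists_measurable_fin_approximation {Ω E : Type*} [Nonempty Ω] [MeasurableSpace Ω]
    [PseudoMetricSpace E] [MeasurableSpace E] [OpensMeasurableSpace E] {F : Ω → E}
    (hF : Measurable F) (hFb : TotallyBounded (Set.range F)) {ε : ℝ} (hε : 0 < ε) :
    ∃ (n : ℕ) (z : Fin n → Ω) (π : Ω → Fin n), Measurable π ∧
      ∀ ω, dist (F ω) (F (z (π ω))) < ε := by
  obtain ⟨t, htF, ht, hcover⟩ := Metric.finite_approx_of_totallyBounded hFb ε hε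
  obtain ⟨n, e, -, rfl⟩ := ht.fin_param
  choose z hz using fun k => htF ⟨k, rfl⟩
  have hnear : ∀ ω, ∃ k, dist (F ω) (F (z k)) < ε := fun ω => by
    obtain ⟨_, ⟨k, rfl⟩, hk⟩ := Set.mem_iUnion₂.1 (hcover ⟨ω, rfl⟩)
    exact ⟨k, hz k ▸ hk⟩
  obtain ⟨k₀, -⟩ := hnear (Classical.arbitrary Ω)
  have : NeZero n := ⟨k₀.pos.ne'⟩
  let centre : ℕ → E := fun k => F (z (Fin.ofNat n k))
  let π : Ω → Fin n := fun ω => Fin.ofNat n (SimpleFunc.nearestPtInd centre n (F ω))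
  refine ⟨n, z, π, (measurable_of_countable (Fin.ofNat n)).comp
    ((SimpleFunc.nearestPtInd centre n).measurable.comp hF), fun ω => ?_⟩
  obtain ⟨k, hk⟩ := hnear ω
  have hmin : edist (F (z (π ω))) (F ω) ≤ edist (centre k) (F ω) :=
    SimpleFunc.edist_nearestPt_le centre (F ω) k.isLt.le
  rw [edist_dist, edist_dist, ENNReal.ofReal_le_ofReal_iff dist_nonneg] at hmin
  rw [dist_comm]
  refine hmin.trans_lt ?_
  simpa [centre, dist_comm] using hk

theorem exists_fin_approximation_of_bounded {Ω : Type*} [Nonempty Ω] [MeasurableSpace Ω]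
    (X : Submodule ℝ (Ω → ℝ)) [FiniteDimensional ℝ X] (hmeas : ∀ f ∈ X, Measurable f)
    (hbdd : ∀ f ∈ X, ∃ M, ∀ ω, |f ω| ≤ M) {ε : ℝ} (hε : 0 < ε) :
    ∃ (y : Fin (finrank ℝ X) → Ω) (n : ℕ) (z : Fin n → Ω) (π : Ω → Fin n), Measurable π ∧
      ∀ f ∈ X, ∀ ω, |f ω| ≤ |f (z (π ω))| + ε * ∑ k, |f (y k)| := by
  obtain ⟨y, l, hl, hrepr⟩ := exists_lagrange_basis X
  have hmeasF : Measurable fun ω k => l k ω := measurable_pi_lambda _ fun k => hmeas _ (hl k)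
  have htb : TotallyBounded (Set.range fun ω k => l k ω) := by
    choose M hM using fun k => hbdd _ (hl k)
    have hbox := isCompact_univ_pi fun k => isCompact_Icc (a := -M k) (b := M k)
    refine hbox.totallyBounded.subset ?_
    rintro _ ⟨ω, rfl⟩ k -
    exact abs_le.1 (hM k ω)
  obtain ⟨n, z, π, hπ, hclose⟩ := exists_measurable_fin_approximation hmeasF htb hε
  refine ⟨y, n, z, π, hπ, fun f hf ω => ?_⟩
  have hdiff : |f ω - f (z (π ω))| ≤ ε * ∑ k, |f (y k)| := by
    rw [hrepr f hf ω, hrepr f hf (z (π ω)), ← Finset.sum_sub_distrib, Finset.mul_sum]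
    refine (Finset.abs_sum_le_sum_abs _ _).trans (Finset.sum_le_sum fun k _ => ?_)
    rw [← mul_sub, abs_mul, mul_comm, ← Real.dist_eq]
    gcongr
    exact (dist_le_pi_dist (fun k => l k ω) (fun k => l k (z (π ω))) k).trans (hclose ω).le
  linarith [abs_sub_abs_le_abs_sub (f ω) (f (z (π ω)))]

theorem PowerGrowth.map_add_le {Φ : ℝ → ℝ} {r : ℝ} {q : ℕ} (hΦ : PowerGrowth Φ r q) {s t : ℝ}
    (hs : 0 ≤ s) (ht : 0 ≤ t) : Φ (s + t) ≤ Φ (2 * s) + Φ (2 * t) := by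
  rcases le_total s t with hst | hst
  · exact (hΦ.mono (by positivity) (by linarith)).trans
      (le_add_of_nonneg_left (hΦ.nonneg (by positivity)))
  · exact (hΦ.mono (by positivity) (by linarith)).trans
      (le_add_of_nonneg_right (hΦ.nonneg (by positivity)))

theorem PowerGrowth.map_sum_div_sq_card_le {Φ : ℝ → ℝ} {r : ℝ} {q : ℕ} (hΦ : PowerGrowth Φ r q)
    {κ : Type*} [Fintype κ] [Nonempty κ] {t : κ → ℝ} (ht : ∀ k, 0 ≤ t k) :
    Φ ((∑ k, t k) / (Fintype.card κ) ^ 2) ≤ (∑ k, Φ (t k)) / Fintype.card κ := by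
  obtain ⟨j, -, hj⟩ := Finset.exists_max_image Finset.univ t Finset.univ_nonempty
  have hcard : (1 : ℝ) ≤ Fintype.card κ := by exact_mod_cast Fintype.card_pos (α := κ)
  have hsum : ∑ k, t k ≤ Fintype.card κ * t j := by
    simpa using Finset.sum_le_card_nsmul _ _ _ hj
  rw [le_div_iff₀' (by positivity)]
  calc Fintype.card κ * Φ ((∑ k, t k) / (Fintype.card κ) ^ 2)
      ≤ Φ (Fintype.card κ * ((∑ k, t k) / (Fintype.card κ) ^ 2)) :=
        hΦ.mul_le hcard (div_nonneg (Finset.sum_nonneg fun k _ => ht k) (by positivity))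
    _ ≤ Φ (t j) := by
        refine hΦ.mono (mul_nonneg (by positivity)
          (div_nonneg (Finset.sum_nonneg fun k _ => ht k) (by positivity))) ?_
        rw [sq, ← div_div, mul_div_cancel₀ _ (by positivity), div_le_iff₀' (by positivity)]
        exact hsum
    _ ≤ ∑ k, Φ (t k) := Finset.single_le_sum (fun k _ => hΦ.nonneg (ht k)) (Finset.mem_univ j)

theorem integral_comp_eq_sum_measureReal_mul {Ω κ : Type*} [MeasurableSpace Ω] [Fintype κ]
    [MeasurableSpace κ] [DiscreteMeasurableSpace κ] (μ : Measure Ω) [IsFiniteMeasure μ] {π : Ω → κ}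
    (hπ : Measurable π) (g : κ → ℝ) : ∫ ω, g (π ω) ∂μ = ∑ k, μ.real (π ⁻¹' {k}) * g k := by
  rw [← integral_map hπ.aemeasurable .of_discrete, integral_fintype .of_finite]
  simp only [map_measureReal_apply hπ (measurableSet_singleton _), smul_eq_mul]

theorem integral_le_average_weighted_sums {Φ : ℝ → ℝ} {r : ℝ} {q : ℕ} (hΦ : PowerGrowth Φ r q)
    {Ω κ κ' : Type*} [MeasurableSpace Ω] (μ : Measure Ω) [IsProbabilityMeasure μ] [Fintype κ]
    [MeasurableSpace κ] [DiscreteMeasurableSpace κ] [Fintype κ'] [Nonempty κ'] {π : Ω → κ}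
    (hπ : Measurable π) {z : κ → Ω} {y : κ' → Ω} {f : Ω → ℝ}
    (hf : ∀ ω, |f ω| ≤ |f (z (π ω))| + (∑ k, |f (y k)|) / (Fintype.card κ') ^ 2) :
    ∫ ω, Φ |f ω| ∂μ ≤ (∑ k, μ.real (π ⁻¹' {k}) * Φ |4 * f (z k)| +
      (∑ k, Φ |4 * f (y k)|) / Fintype.card κ') / 2 := by
  have hdouble : ∀ t, Φ (2 * |t|) ≤ Φ |4 * t| / 2 := fun t => by
    rw [le_div_iff₀' two_pos, abs_mul, abs_of_pos (by norm_num : (0 : ℝ) < 4)]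
    exact (hΦ.mul_le one_le_two (by positivity)).trans_eq (by ring_nf)
  have hpoint : ∀ ω, Φ |f ω| ≤
      Φ |4 * f (z (π ω))| / 2 + (∑ k, Φ |4 * f (y k)|) / Fintype.card κ' / 2 := fun ω => by
    have hscale : 2 * ((∑ k, |f (y k)|) / (Fintype.card κ') ^ 2) =
        (∑ k, 2 * |f (y k)|) / (Fintype.card κ') ^ 2 := by rw [← Finset.mul_sum, mul_div_assoc]
    refine (hΦ.mono (abs_nonneg _) (hf ω)).trans
      ((hΦ.map_add_le (abs_nonneg _) (by positivity)).trans (add_le_add (hdouble _) ?_))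
    rw [hscale, div_right_comm, Finset.sum_div _ _ 2]
    refine (hΦ.map_sum_div_sq_card_le fun k => by positivity).trans ?_
    gcongr with k
    exact hdouble _
  have hintegrable : Integrable (fun ω => Φ |4 * f (z (π ω))|) μ :=
    (Integrable.of_finite (f := fun k => Φ |4 * f (z k)|)).comp_measurable hπ
  have hsum := integral_comp_eq_sum_measureReal_mul μ hπ fun k => Φ |4 * f (z k)|
  calc ∫ ω, Φ |f ω| ∂μ
      ≤ ∫ ω, (Φ |4 * f (z (π ω))| / 2 + (∑ k, Φ |4 * f (y k)|) / Fintype.card κ' / 2) ∂μ := by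
        refine integral_mono_of_nonneg (.of_forall fun ω => hΦ.nonneg (abs_nonneg _))
          (Integrable.add ?_ (integrable_const _)) (.of_forall hpoint)
        exact hintegrable.div_const 2
    _ = _ := by
        rw [integral_add (hintegrable.div_const 2) (integrable_const _), integral_div,
          hsum, add_div]
        simp

theorem sum_pos_weights_mul {ι : Type*} [Fintype ι] {w : ι → ℝ} (hw : ∀ i, 0 ≤ w i) (g : ι → ℝ) :
    ∑ i : {i // 0 < w i}, w i * g i = ∑ i, w i * g i := by
  rw [← Finset.sum_filter_of_ne (p := fun i => 0 < w i) fun i _ h =>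
    (hw i).lt_of_ne' (left_ne_zero_of_mul h)]
  exact (Finset.sum_subtype _ (by simp) fun i => w i * g i).symm

theorem exists_weighted_points {Φ : ℝ → ℝ} {r : ℝ} {q : ℕ} (hΦ : PowerGrowth Φ r q) {Ω : Type*}
    [MeasurableSpace Ω] (μ : Measure Ω) [IsProbabilityMeasure μ] (X : Submodule ℝ (Ω → ℝ))
    (hX : 0 < finrank ℝ X) (hmeas : ∀ f ∈ X, Measurable f)
    (hbdd : ∀ f ∈ X, ∃ M, ∀ ω, |f ω| ≤ M) :
    ∃ (ι : Type) (_ : Fintype ι) (z : ι → Ω) (w : ι → ℝ), (∀ i, 0 < w i) ∧ ∑ i, w i = 1 ∧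
      ∀ f ∈ X, 1 ≤ ∫ ω, Φ |f ω| ∂μ → 1 ≤ ∑ i, w i * Φ |4 * f (z i)| := by
  have : FiniteDimensional ℝ X := Module.finite_of_finrank_pos hX
  have : Nonempty (Fin (finrank ℝ X)) := ⟨⟨0, hX⟩⟩
  have : Nonempty Ω := nonempty_of_isProbabilityMeasure μ
  set N : ℝ := ((finrank ℝ X : ℕ) : ℝ) with hN
  have hN0 : 0 < N := Nat.cast_pos.2 hX
  obtain ⟨y, n, z, π, hπ, hclose⟩ := exists_fin_approximation_of_bounded X hmeas hbdd
    (show 0 < (N ^ 2)⁻¹ by positivity)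
  let w : Fin n ⊕ Fin (finrank ℝ X) → ℝ :=
    Sum.elim (fun k => μ.real (π ⁻¹' {k}) / 2) fun _ => N⁻¹ / 2
  have hw : ∀ i, 0 ≤ w i := by
    rintro (_ | _)
    exacts [div_nonneg measureReal_nonneg two_pos.le, (half_pos (inv_pos.2 hN0)).le]
  refine ⟨{i // 0 < w i}, inferInstance, fun i => Sum.elim z y i, fun i => w i, fun i => i.2,
    ?_, fun f hf h1 => ?_⟩
  · have hmass : ∑ k, μ.real (π ⁻¹' {k}) = 1 := by
      simpa using (integral_comp_eq_sum_measureReal_mul μ hπ fun _ => 1).symm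
    have hsum := sum_pos_weights_mul hw fun _ => 1
    simp only [mul_one] at hsum
    rw [hsum, Fintype.sum_sum_type]
    simp only [w, Sum.elim_inl, Sum.elim_inr, ← Finset.sum_div, hmass, Finset.sum_const,
      Finset.card_univ, Fintype.card_fin, nsmul_eq_mul, ← hN, mul_inv_cancel₀ hN0.ne']
    norm_num
  · rw [sum_pos_weights_mul hw fun i => Φ |4 * f (Sum.elim z y i)|, Fintype.sum_sum_type]
    refine (h1.trans (integral_le_average_weighted_sums hΦ μ hπ (z := z) (y := y) fun ω =>
      (hclose f hf ω).trans_eq ?_)).trans_eq ?_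
    · rw [Fintype.card_fin, inv_mul_eq_div]
    · simp only [w, Sum.elim_inl, Sum.elim_inr, Fintype.card_fin, ← hN, div_mul_eq_mul_div,
        ← Finset.sum_div, inv_mul_eq_div, add_div]

end Discretization

theorem exists_sample.{u} {Φ Ψ : ℝ → ℝ} {r a : ℝ} {q : ℕ} (hΦ : PowerGrowth Φ r q) (hr2 : r ≤ 2)
    (hΨ : DilationMajorant Φ Ψ r q a) :
    ∃ c : ℝ, 0 < c ∧ ∀ N : ℕ, 1 ≤ N → ∃ m : ℕ, 0 < m ∧
      m ≤ c * Ψ ((N : ℝ) ^ (1 / r)) * Real.logb 2 (2 * N) ^ 2 ∧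
      ∀ (Ω : Type u) [MeasurableSpace Ω] (μ : Measure Ω) [IsProbabilityMeasure μ]
        (X : Submodule ℝ (Ω → ℝ)), (∀ f ∈ X, Measurable f) → (∀ f ∈ X, ∃ M, ∀ ω, |f ω| ≤ M) →
        Module.finrank ℝ X = N →
        ∃ x : Fin m → Ω, ∀ f ∈ X, 1 ≤ ∫ ω, Φ |f ω| ∂μ →
          m ≤ ∑ k, Φ ((96 * 4 ^ q) ^ 2 * 4 * |f (x k)|) := by
  obtain ⟨c, hc, hsample⟩ := exists_weighted_sample hΦ hr2 hΨ
  refine ⟨c, hc, fun N hN => ?_⟩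
  obtain ⟨m, hm, hmc, hsampleN⟩ := hsample N (by exact_mod_cast hN)
  refine ⟨m, hm, hmc, fun Ω _ μ _ X hmeas hbdd hX => ?_⟩
  obtain ⟨ι, _, z, w, hw, hw1, hdiscrete⟩ := exists_weighted_points hΦ μ X (by omega) hmeas hbdd
  have : FiniteDimensional ℝ X := Module.finite_of_finrank_pos (by omega)
  obtain ⟨x, hx⟩ := hsampleN z w hw hw1 X (by exact_mod_cast hX.le)
  refine ⟨x, fun f hf h1 => ?_⟩
  refine (hx _ (X.smul_mem 4 hf) (hdiscrete f hf h1)).trans_eq (Finset.sum_congr rfl fun k _ => ?_)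
  rw [Pi.smul_apply, smul_eq_mul, abs_mul, abs_of_pos (by norm_num : (0 : ℝ) < 4), mul_assoc]

/-! ### Luxemburg functionals -/

theorem IsPhiPrefun.pos {Φ : ℝ → ℝ} (hΦ : IsPhiPrefun Φ) {q : ℝ} (hdec : DecQ Φ q) {t : ℝ}
    (ht : 0 < t) : 0 < Φ t := by
  obtain ⟨T, hT, htT⟩ := ((hΦ.tendsto_atTop.eventually_gt_atTop 0).and
    (Filter.eventually_gt_atTop t)).exists
  have hquot : 0 < Φ t / t ^ q :=
    (div_pos hT (Real.rpow_pos_of_pos (ht.trans htT) q)).trans_le (hdec t T ht htT)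
  exact (div_pos_iff_of_pos_right (Real.rpow_pos_of_pos ht q)).1 hquot

theorem DecQ.map_mul_le_pow_mul {Φ : ℝ → ℝ} {q : ℝ} (hdec : DecQ Φ q) {n : ℕ} (hqn : q ≤ n)
    {y t : ℝ} (hy : 1 ≤ y) (ht : 0 < t) (hΦt : 0 ≤ Φ t) : Φ (y * t) ≤ y ^ n * Φ t := by
  rcases hy.eq_or_lt with rfl | hy1
  · simp
  have hy0 : 0 < y := by linarith
  have hpow : y ^ q ≤ y ^ n := by
    rw [← Real.rpow_natCast]
    exact Real.rpow_le_rpow_of_exponent_le hy hqn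
  have hquot := hdec t (y * t) ht (lt_mul_of_one_lt_left ht hy1)
  rw [Real.mul_rpow hy0.le ht.le, ← div_div, div_le_div_iff_of_pos_right (by positivity),
    div_le_iff₀' (by positivity)] at hquot
  exact hquot.trans (mul_le_mul_of_nonneg_right hpow hΦt)

theorem AIncP.rpow_mul_le {Φ : ℝ → ℝ} {p a : ℝ} (hinc : AIncP Φ p a) (ha : 1 ≤ a) {r : ℝ}
    (hrp : r ≤ p) {y t : ℝ} (hy : 1 ≤ y) (ht : 0 < t) (hΦt : 0 ≤ Φ t) :
    y ^ r * Φ t ≤ a * Φ (y * t) := by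
  rcases hy.eq_or_lt with rfl | hy1
  · simpa using le_mul_of_one_le_left hΦt ha
  have hy0 : 0 < y := by linarith
  have hquot := hinc t (y * t) ht (lt_mul_of_one_lt_left ht hy1)
  rw [Real.mul_rpow hy0.le ht.le, ← div_div, ← mul_div_assoc,
    div_le_div_iff_of_pos_right (by positivity), ← mul_div_assoc,
    le_div_iff₀' (by positivity)] at hquot
  exact (mul_le_mul_of_nonneg_right (Real.rpow_le_rpow_of_exponent_le hy hrp) hΦt).trans hquot

theorem IncP.aIncP {Φ : ℝ → ℝ} {p : ℝ} (hinc : IncP Φ p) : AIncP Φ p 1 := fun s t hs hst =>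
  (hinc s t hs hst).trans_eq (one_mul _).symm

theorem IsPhiPrefun.powerGrowth {Φ : ℝ → ℝ} (hΦ : IsPhiPrefun Φ) {p q r : ℝ} {n : ℕ}
    (hinc : IncP Φ p) (hdec : DecQ Φ q) (hr : 1 ≤ r) (hrp : r ≤ p) (hqn : q ≤ n) :
    PowerGrowth Φ r n where
  one_le := hr
  map_zero := hΦ.map_zero
  pos _ := hΦ.pos hdec
  rpow_mul_le y t hy ht := by
    rcases ht.eq_or_lt with rfl | ht'
    · simp [hΦ.map_zero]
    · simpa using hinc.aIncP.rpow_mul_le le_rfl hrp hy ht' (hΦ.nonneg t ht)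
  le_pow_mul y t hy ht := by
    rcases ht.eq_or_lt with rfl | ht'
    · simp [hΦ.map_zero]
    · exact hdec.map_mul_le_pow_mul hqn hy ht' (hΦ.nonneg t ht)

theorem PowerGrowth.dilationMajorant {Φ Ψ : ℝ → ℝ} {p q r a K : ℝ} {n : ℕ}
    (hΦ : PowerGrowth Φ r n) (hΨ : IsPhiPrefun Ψ) (ha : 1 ≤ a) (hinc : AIncP Ψ p a)
    (hdec : DecQ Ψ q) (hrp : r ≤ p) (hqn : q ≤ n) (hKpos : 0 < K)
    (hK : ∀ t s, 0 < t → 0 < s → Φ (t * s) / Φ t ≤ K * Ψ s) :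
    DilationMajorant Φ (fun s => K * Ψ s) r n a where
  pos _ ht := mul_pos hKpos (hΨ.pos hdec ht)
  rpow_mul_le y t hy ht := by
    linarith [mul_le_mul_of_nonneg_left
      (hinc.rpow_mul_le ha hrp hy ht (hΨ.nonneg t ht.le)) hKpos.le]
  le_pow_mul y t hy ht := by
    linarith [mul_le_mul_of_nonneg_left
      (hdec.map_mul_le_pow_mul hqn hy ht (hΨ.nonneg t ht.le)) hKpos.le]
  map_mul_le w s hw hs := by
    rcases hw.eq_or_lt with rfl | hw'
    · simp [hΦ.map_zero]
    · exact (div_le_iff₀ (hΦ.pos w hw')).1 (hK w s hw' hs)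

theorem PowerGrowth.exists_map_div_le {Φ Ψ : ℝ → ℝ} {r K : ℝ} {q : ℕ} (hΦ : PowerGrowth Φ r q)
    (hΨ0 : 0 ≤ Ψ 0) (hK : ∀ s, 0 < s → Φ s ≤ K * Ψ s) (hΨ : ∀ s, 0 < s → 0 < Ψ s) :
    ∃ L : ℝ, 0 < L ∧ ∀ t, 0 ≤ t → Φ (t / L) ≤ Ψ t / 2 := by
  have hKpos : 0 < K := pos_of_mul_pos_left ((hΦ.pos 1 one_pos).trans_le (hK 1 one_pos))
    (hΨ 1 one_pos).le
  refine ⟨2 * K + 1, by positivity, fun t ht => ?_⟩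
  rcases ht.eq_or_lt with rfl | ht'
  · rw [zero_div, hΦ.map_zero]
    positivity
  have hle := hΦ.mul_le (by linarith : 1 ≤ 2 * K + 1) (by positivity : 0 ≤ t / (2 * K + 1))
  rw [mul_div_cancel₀ _ (by positivity)] at hle
  nlinarith [hK t ht', hΨ t ht']

theorem discLuxNorm_feasible_nonempty {Ω : Type*} {Ψ : ℝ → ℝ} (hΨ : IsPhiPrefun Ψ) {m : ℕ}
    (x : Fin m → Ω) (f : Ω → ℝ) :
    {lam : ℝ | 0 < lam ∧ (∑ j, Ψ (|f (x j)| / lam)) / (m : ℝ) ≤ 1}.Nonempty := by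
  obtain ⟨t, ht, ht0⟩ := ((hΨ.tendsto_zero.eventually_le_const zero_lt_one).and
    self_mem_nhdsWithin).exists
  have ht0 : 0 < t := ht0
  obtain ⟨B, hB⟩ := (Set.finite_range fun j => |f (x j)|).bddAbove
  have hscale : 0 < max B 1 / t := by positivity
  refine ⟨max B 1 / t, hscale, div_le_one_of_le₀ ?_ m.cast_nonneg⟩
  refine (Finset.sum_le_card_nsmul _ _ 1 fun j _ => ?_).trans_eq (by simp)
  refine le_trans (hΨ.mono (show (0 : ℝ) ≤ _ by positivity) ht0.le ?_) ht
  rw [div_le_iff₀ hscale, mul_div_cancel₀ _ ht0.ne']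
  exact (hB ⟨j, rfl⟩).trans (le_max_left _ _)

theorem luxNorm_le_mul_discLuxNorm {Ω : Type*} [MeasurableSpace Ω] {μ : Measure Ω} {Φ Ψ : ℝ → ℝ}
    (hΨ : IsPhiPrefun Ψ) {L : ℝ} (hL : 0 < L) (hΦΨ : ∀ t, 0 ≤ t → Φ (t / L) ≤ Ψ t / 2)
    {A : ℝ} (hA : 0 < A) {m : ℕ} (hm : 0 < m) {x : Fin m → Ω} {f : Ω → ℝ}
    (hsample : ∀ lam, 0 < lam → 1 ≤ ∫ ω, Φ (|f ω| / lam) ∂μ →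
      m ≤ ∑ j, Φ (A * (|f (x j)| / lam))) :
    luxNorm μ Φ f ≤ A * L * discLuxNorm Ψ x f := by
  rw [← div_le_iff₀' (by positivity)]
  refine le_csInf (discLuxNorm_feasible_nonempty hΨ x f) fun lam ⟨hlam, hfeasible⟩ => ?_
  have hm' : (0 : ℝ) < m := Nat.cast_pos.2 hm
  rw [div_le_iff₀' (by positivity)]
  refine csInf_le ⟨0, fun _ h => h.1.le⟩ ⟨by positivity, le_of_not_gt fun hlarge => ?_⟩
  have hlower := hsample (A * L * lam) (by positivity) hlarge.le
  have hupper : ∑ j, Φ (A * (|f (x j)| / (A * L * lam))) ≤ m / 2 :=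
    calc _ ≤ ∑ j, Ψ (|f (x j)| / lam) / 2 := Finset.sum_le_sum fun j _ => by
          rw [show A * (|f (x j)| / (A * L * lam)) = |f (x j)| / lam / L by field_simp]
          exact hΦΨ _ (by positivity)
      _ ≤ m / 2 := by
          rw [← Finset.sum_div]
          linarith [(div_le_one hm').1 hfeasible]
  linarith

theorem statement14_general.{u} {p : ℝ} (hp : 1 ≤ p) {Φ Ψ : ℝ → ℝ} (hΦ : IsPhiPrefun Φ)
    (hincΦ : IncP Φ p) (hdecΦ : ∃ q, DecQ Φ q) (hΨ : IsPhiPrefun Ψ) {a : ℝ} (ha : 1 ≤ a)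
    (hincΨ : AIncP Ψ p a) (hdecΨ : ∃ q, DecQ Ψ q) {K : ℝ}
    (hK : ∀ t s, 0 < t → 0 < s → Φ (t * s) / Φ t ≤ K * Ψ s) :
    ∃ C c : ℝ, 0 < C ∧ 0 < c ∧
      ∀ (Ω : Type u) [MeasurableSpace Ω] (μ : Measure Ω) [IsProbabilityMeasure μ] (N : ℕ), 1 ≤ N →
      ∀ X : Submodule ℝ (Ω → ℝ), (∀ f ∈ X, Measurable f) → (∀ f ∈ X, ∃ M, ∀ ω, |f ω| ≤ M) →
        Module.finrank ℝ X = N →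
        ∃ (m : ℕ) (x : Fin m → Ω),
          m ≤ c * Ψ ((N : ℝ) ^ (1 / min p 2)) * Real.logb 2 (2 * N) ^ 2 ∧
          ∀ f ∈ X, luxNorm μ Φ f ≤ C * discLuxNorm Ψ x f := by
  obtain ⟨qΦ, hdecΦ⟩ := hdecΦ
  obtain ⟨qΨ, hdecΨ⟩ := hdecΨ
  obtain ⟨q, hq⟩ := exists_nat_ge (max qΦ qΨ)
  have hΦg : PowerGrowth Φ (min p 2) q := hΦ.powerGrowth hincΦ hdecΦ (le_min hp one_le_two)
    (min_le_left p 2) ((le_max_left _ _).trans hq)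
  have hΦ1 := hΦg.pos 1 one_pos
  have hKpos : 0 < K := by
    have hK11 := hK 1 1 one_pos one_pos
    rw [one_mul, div_self hΦ1.ne'] at hK11
    exact pos_of_mul_pos_left (zero_lt_one.trans_le hK11) (hΨ.pos hdecΨ one_pos).le
  have hΨg := hΦg.dilationMajorant hΨ ha hincΨ hdecΨ (min_le_left p 2)
    ((le_max_right _ _).trans hq) hKpos hK
  obtain ⟨L, hL, hΦΨ⟩ := hΦg.exists_map_div_le hΨ.map_zero.ge (K := K * Φ 1) (fun s hs => by
    linarith [hΨg.map_mul_le 1 s zero_le_one hs, congrArg Φ (one_mul s)]) fun s => hΨ.pos hdecΨ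
  obtain ⟨c, hc, hsample⟩ := exists_sample hΦg (min_le_right p 2) hΨg
  refine ⟨(96 * 4 ^ q) ^ 2 * 4 * L, c * K, by positivity, by positivity,
    fun Ω _ μ _ N hN X hmeas hbdd hX => ?_⟩
  obtain ⟨m, hm, hmc, hsampleN⟩ := hsample N hN
  obtain ⟨x, hx⟩ := hsampleN Ω μ X hmeas hbdd hX
  refine ⟨m, x, hmc.trans_eq (by ring), fun f hf =>
    luxNorm_le_mul_discLuxNorm hΨ hL hΦΨ (by positivity) hm fun lam hlam h1 => ?_⟩
  have habs : ∀ ω, |(lam⁻¹ • f) ω| = |f ω| / lam := fun ω => by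
    rw [Pi.smul_apply, smul_eq_mul, abs_mul, abs_of_pos (inv_pos.2 hlam), inv_mul_eq_div]
  simpa only [habs] using hx _ (X.smul_mem lam⁻¹ hf) (by simpa only [habs] using h1)

/-- Remark rem5.1. Under the same assumptions on `Φ` and `Ψ` as in
Theorem t5.1, for every `N`-dimensional subspace `X_N ⊂ C(Ω)` (no further assumptions) there
are `m ≤ c Ψ(N^{1/min{p,2}})(log₂ 2N)³` points `x₁,…,x_m ∈ Ω` such that
`‖f‖_Φ ≤ C (M_{Φ,Ψ}(m))^{1/p} ‖f‖_{Ψ,x}` for all `f ∈ X_N`, with equal weights `1/m`. -/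
theorem statement14 (p : ℝ) (hp : 1 < p)
    (Φ φ : ℝ → ℝ) (hpre : IsPhiPrefun Φ) (hphiw : ∃ a : ℝ, 1 ≤ a ∧ AIncP Φ 1 a)
    (hinc : IncP Φ p) (hdecΦ : ∃ q : ℝ, 1 ≤ q ∧ DecQ Φ q)
    (hsupfin : ∃ M : ℝ, ∀ t : ℝ, 0 < t → Φ t * Φ t⁻¹ ≤ M)
    (hderiv : ∀ t : ℝ, 0 < t → HasDerivAt Φ (φ t) t)
    (hφcont : ContinuousOn φ (Set.Ioi 0))
    (Ψ : ℝ → ℝ) (hpreΨ : IsPhiPrefun Ψ) (hpsiw : ∃ a : ℝ, 1 ≤ a ∧ AIncP Ψ 1 a)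
    (aΨ : ℝ) (haΨ : 1 ≤ aΨ) (hAΨ : AIncP Ψ p aΨ)
    (hdecΨ : ∃ q : ℝ, 1 ≤ q ∧ DecQ Ψ q)
    (K : ℝ) (hK1 : 1 ≤ K)
    (hK : ∀ t s : ℝ, 0 < t → 0 < s → Φ (t * s) / Φ t ≤ K * Ψ s) :
    ∃ C c : ℝ, 0 < C ∧ 0 < c ∧
      ∀ (Ω : Type) [MetricSpace Ω] [CompactSpace Ω] [MeasurableSpace Ω] [BorelSpace Ω],
      ∀ (μ : Measure Ω), IsProbabilityMeasure μ →
      ∀ N : ℕ, 1 ≤ N →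
      ∀ X : Submodule ℝ (Ω → ℝ),
        (∀ f ∈ X, Continuous f) →
        Module.finrank ℝ X = N →
        ∃ (m : ℕ) (x : Fin m → Ω),
          (m : ℝ) ≤ c * Ψ ((N : ℝ) ^ (1 / min p 2)) * (Real.logb 2 (2 * N)) ^ 3 ∧
          ∀ f ∈ X, luxNorm μ Φ f ≤ C * (MOf Φ Ψ m) ^ (1 / p) * discLuxNorm Ψ x f := by
  obtain ⟨C, c, hC, hc, hsample⟩ := statement14_general hp.le hpre hinc
    (hdecΦ.imp fun _ h => h.2) hpreΨ haΨ hAΨ (hdecΨ.imp fun _ h => h.2) hK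
  refine ⟨C, c, hC, hc, fun Ω _ _ _ _ μ _ N hN X hcont hX => ?_⟩
  have hbdd : ∀ f ∈ X, ∃ M, ∀ ω, |f ω| ≤ M := fun f hf => by
    obtain ⟨M, hM⟩ := (isCompact_range (hcont f hf).abs).bddAbove
    exact ⟨M, fun ω => hM ⟨ω, rfl⟩⟩
  obtain ⟨m, x, hm, hx⟩ := hsample Ω μ N hN X (fun f hf => (hcont f hf).measurable) hbdd hX
  have hlog : 1 ≤ Real.logb 2 (2 * N) := one_le_logb_two_two_mul (by exact_mod_cast hN)
  have hnorm (f) : 0 ≤ discLuxNorm Ψ x f := Real.sInf_nonneg fun _ h => h.1.le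
  refine ⟨m, x, hm.trans ?_, fun f hf => (hx f hf).trans ?_⟩
  · exact mul_le_mul_of_nonneg_left (pow_le_pow_right₀ hlog (by norm_num))
      (mul_nonneg hc.le (hpreΨ.nonneg _ (by positivity)))
  · exact mul_le_mul_of_nonneg_right (le_mul_of_one_le_right hC.le
      (Real.one_le_rpow (le_max_left _ _) (by positivity))) (hnorm f)
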